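/- The map r ↦ W_r(r, π/4) = (8/π)·∑_{n=1}^∞ (−1)^{n−1}·(mₙ/(mₙ²−1))·r^{mₙ²−1} is a strictly increasing real-analytic bijection from (0,1) onto (0,√2); let g : (0,√2) → (0,1) denote its inverse. Then for every s ∈ (0,√2), the value of u at the diagonal point (s/√2, s/√2) equals s·g(s) − W(g(s), π/4); the function φ(s) := u(s/√2, s/√2) is real-analytic on (0,√2), with φ′(s) = g(s) > 0 and φ″(s) = 1/W_{rr}(g(s),π/4) > 0, so φ is strictly increasing and strictly convex. -/

import Mathlib

/-!
Write `θ = π/4 + φ`, so that `sin (mₙ θ) = (-1)^n cos (mₙ φ)` for the frequencies `2, 6, 10, …`,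
indexed from `n = 0`. Then `∑ (-1)^n r^{mₙ²} sin (mₙ φ)` is a rescaled Jacobi theta function `θ₁`, and the whole result
rests on its positivity for `0 < φ < π/2` (`theta_lower`), which follows from the triple product.
The infinite product is avoided: `theta_finite` is the finite `q`-binomial version, proved by
induction on the number of factors, and `N → ∞` is taken only in the inequality.

Two consequences of this positivity are used.
* `Wrr_pos`: `W_rr(r, π/4) > 0`, as it is a multiple of the slope of `θ₁` at its zero. So
  `Wr4` is strictly increasing. Its limit at `0` is `0`. Its limit at `1` is `√2`, because
  `r W_r = W + (8/π) ∑ (-1)^n r^{mₙ²}/mₙ`, the last series tends to `π/8` (Leibniz series, summed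
  along lacunary exponents), and `W(1, θ) = cos θ + sin θ - 1` (`W_one`). The boundary value comes
  from the ODE `w'' = -1 - w`, itself a form of the Fourier series of the second Bernoulli
  polynomial.
* `slope_ineq`: `cos φ · W_θ + sin φ · r W_r ≤ 0` for `φ ∈ [0, π/4]`.

For the minimax, fix `s ∈ (0, √2)`; at the point `(s/√2, s/√2)` the payoff is
`r s cos φ - W(r, π/4 + φ)`. At a radial maximizer `r < 1` one has `W_r = s cos φ`, and
`slope_ineq` says that the payoff with `r` frozen has nonnegative `φ`-derivative; for `r = 1` the
same is read off from `W_one`. Since the radial maximum dominates each frozen payoff, its lower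
right Dini derivative is nonnegative on `[0, π/4)`. As it is continuous and even in `φ`, it is
minimal at `φ = 0` (`radMax_zero_le`). Hence `u` at the point is the Legendre transform at `s` of
the convex function `W(·, π/4)` (`φdiag_eq`), and the analyticity and derivative formulas follow
from the inverse function theorem applied to `Wr4`.
-/

open Real Set Topology Filter
def mIdx (n : ℕ) : ℕ := 4 * n + 2

/-- `W(r,θ) = (8/π) ∑_{n≥1} r^{mₙ²} sin(mₙ θ) / ((mₙ² − 1) mₙ)` with `mₙ = 4n − 2`. -/
noncomputable def W (r θ : ℝ) : ℝ :=
  (8 / π) * ∑' n : ℕ,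
    r ^ (mIdx n ^ 2) * Real.sin ((mIdx n : ℝ) * θ) / (((mIdx n : ℝ) ^ 2 - 1) * (mIdx n : ℝ))

/-- The minimax formula `u(x,y) = min_{θ∈[0,π/2]} max_{r∈[0,1]} ( r(x cos θ + y sin θ) − W(r,θ) )`.
(The extrema are attained, so `⨅`/`⨆` over the compact index sets agree with min/max.) -/
noncomputable def u (x y : ℝ) : ℝ :=
  ⨅ θ : Icc (0 : ℝ) (π / 2), ⨆ r : Icc (0 : ℝ) 1,
    ((r : ℝ) * (x * Real.cos (θ : ℝ) + y * Real.sin (θ : ℝ)) - W (r : ℝ) (θ : ℝ))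

/-- The radial derivative of `W` along `θ = π/4`. -/
noncomputable def Wr4 (r : ℝ) : ℝ := deriv (fun s => W s (π / 4)) r

/-- `u` restricted to the diagonal, in arclength parametrization: `φ(s) = u(s/√2, s/√2)`. -/
noncomputable def φdiag (s : ℝ) : ℝ := u (s / Real.sqrt 2) (s / Real.sqrt 2)

/-! ### Positivity of `θ₁` via the finite Jacobi triple product -/

/-- The finite `q`-factorial `(Q)_j = ∏_{k=1}^{j} (1 - Q^k)`. -/
noncomputable def qFac (Q : ℝ) (j : ℕ) : ℝ := ∏ k ∈ Finset.range j, (1 - Q ^ (k + 1))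

/-- The reciprocal `1 / (Q)_j`, extended by `0` to negative `j`; with this convention the
recursion `recFac_sub_one` holds for every integer `j`. -/
noncomputable def recFac (Q : ℝ) (j : ℤ) : ℝ := if 0 ≤ j then (qFac Q j.toNat)⁻¹ else 0

/-- The triangular number `n (n + 1) / 2`. -/
def triIdx (n : ℕ) : ℕ := ∑ k ∈ Finset.range (n + 1), k

/-- The coefficient `Q^{n(n+1)/2}` times the Gaussian binomial `[2N+1 choose N-n]_Q` of the
finite Jacobi triple product; it vanishes for `n > N`. -/
noncomputable def thetaCoeff (Q : ℝ) (N n : ℕ) : ℝ :=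
  Q ^ triIdx n * qFac Q (2 * N + 1) * recFac Q ((N : ℤ) - n) / qFac Q (N + n + 1)

lemma triIdx_succ (n : ℕ) : triIdx (n + 1) = triIdx n + (n + 1) := by
  simp [triIdx, Finset.sum_range_succ]

lemma triIdx_two (n : ℕ) : 2 * triIdx n = n * (n + 1) := by
  induction n with
  | zero => simp [triIdx]
  | succ k ih => rw [triIdx_succ, mul_add, ih]; ring

lemma qFac_succ (Q : ℝ) (j : ℕ) : qFac Q (j + 1) = qFac Q j * (1 - Q ^ (j + 1)) := by
  simp [qFac, Finset.prod_range_succ]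

lemma one_sub_pow_pos {Q : ℝ} (h0 : 0 < Q) (h1 : Q < 1) (k : ℕ) : 0 < 1 - Q ^ (k + 1) :=
  sub_pos.2 (pow_lt_one₀ h0.le h1 (Nat.succ_ne_zero k))

lemma qFac_pos {Q : ℝ} (h0 : 0 < Q) (h1 : Q < 1) (j : ℕ) : 0 < qFac Q j :=
  Finset.prod_pos fun k _ => one_sub_pow_pos h0 h1 k

lemma qFac_antitone {Q : ℝ} (h0 : 0 < Q) (h1 : Q < 1) : Antitone (qFac Q) := by
  refine antitone_nat_of_succ_le fun n => ?_
  rw [qFac_succ]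
  have := qFac_pos h0 h1 n
  have : 0 < Q ^ (n + 1) := by positivity
  nlinarith

lemma recFac_sub_one {Q : ℝ} (h0 : 0 < Q) (h1 : Q < 1) (j : ℤ) :
    recFac Q (j - 1) = (1 - Q ^ j) * recFac Q j := by
  rcases lt_trichotomy j 0 with h | h | h
  · simp [recFac, not_le.2 h, show ¬ (1 ≤ j) by omega]
  · subst h; simp [recFac]
  · obtain ⟨n, rfl⟩ : ∃ n : ℕ, j = n + 1 := ⟨(j - 1).toNat, by omega⟩
    have e1 : ((n : ℤ) + 1 - 1) = n := by ring
    have e2 : ((n : ℤ) + 1).toNat = n + 1 := by omega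
    have := (qFac_pos h0 h1 n).ne'
    have h2 := (one_sub_pow_pos h0 h1 n).ne'
    rw [e1]
    simp only [recFac, e2, qFac_succ]
    rw [if_pos (by omega), if_pos (by omega), Int.toNat_natCast]
    rw [show Q ^ ((n : ℤ) + 1) = Q ^ (n + 1) by exact_mod_cast zpow_natCast Q (n + 1)]
    field_simp

/-- The `q`-Pascal type recursion of the coefficients, away from the reflection point. -/
lemma thetaCoeff_succ {Q : ℝ} (h0 : 0 < Q) (h1 : Q < 1) (N n : ℕ) :
    thetaCoeff Q (N + 1) (n + 1) = (1 + Q ^ (2 * (N + 1))) * thetaCoeff Q N (n + 1)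
      + Q ^ (N + 1) * (thetaCoeff Q N n + thetaCoeff Q N (n + 2)) := by
  have a1 : recFac Q ((N : ℤ) - (n + 1)) = (1 - Q ^ ((N : ℤ) - n)) * recFac Q ((N : ℤ) - n) := by
    rw [← recFac_sub_one h0 h1]; congr 1; ring
  have a2 : recFac Q ((N : ℤ) - (n + 2)) = (1 - Q ^ ((N : ℤ) - n - 1)) *
      ((1 - Q ^ ((N : ℤ) - n)) * recFac Q ((N : ℤ) - n)) := by
    rw [← recFac_sub_one h0 h1, ← recFac_sub_one h0 h1]; congr 1; ring
  have b1 : qFac Q (N + 1 + (n + 1) + 1) = qFac Q (N + n + 1) * (1 - Q ^ (N + n + 2)) *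
      (1 - Q ^ (N + n + 3)) := by
    rw [show N + 1 + (n + 1) + 1 = N + n + 1 + 1 + 1 by ring, qFac_succ, qFac_succ]
  have b2 : qFac Q (N + (n + 1) + 1) = qFac Q (N + n + 1) * (1 - Q ^ (N + n + 2)) := by
    rw [show N + (n + 1) + 1 = N + n + 1 + 1 by ring, qFac_succ]
  have b3 : qFac Q (N + (n + 2) + 1) = qFac Q (N + n + 1) * (1 - Q ^ (N + n + 2)) *
      (1 - Q ^ (N + n + 3)) := by
    rw [show N + (n + 2) + 1 = N + n + 1 + 1 + 1 by ring, qFac_succ, qFac_succ]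
  have c1 : qFac Q (2 * (N + 1) + 1) = qFac Q (2 * N + 1) * (1 - Q ^ (2 * N + 2)) *
      (1 - Q ^ (2 * N + 3)) := by
    rw [show 2 * (N + 1) + 1 = 2 * N + 1 + 1 + 1 by ring, qFac_succ, qFac_succ]
  have e : ((N + 1 : ℕ) : ℤ) - ((n + 1 : ℕ) : ℤ) = (N : ℤ) - n := by push_cast; ring
  unfold thetaCoeff
  rw [e, b1, b2, b3, c1, triIdx_succ (n + 1), triIdx_succ n]
  push_cast
  rw [a1, a2]
  have hE := (qFac_pos h0 h1 (N + n + 1)).ne'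
  have h2 : 1 - Q ^ (N + n + 2) ≠ 0 := (one_sub_pow_pos h0 h1 (N + n + 1)).ne'
  have h3 : 1 - Q ^ (N + n + 3) ≠ 0 := (one_sub_pow_pos h0 h1 (N + n + 2)).ne'
  have hQ := h0.ne'
  generalize qFac Q (N + n + 1) = E at *
  generalize qFac Q (2 * N + 1) = F at *
  generalize recFac Q ((N : ℤ) - n) = R at *
  have z1 : Q ^ ((N : ℤ) - n) = Q ^ N / Q ^ n := by
    rw [zpow_sub₀ hQ, zpow_natCast, zpow_natCast]
  have z2 : Q ^ ((N : ℤ) - n - 1) = Q ^ N / Q ^ n / Q := by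
    rw [zpow_sub₀ hQ, z1, zpow_one]
  rw [z1, z2]
  have hy : Q ^ n ≠ 0 := by positivity
  field_simp
  ring

/-- The same recursion at the reflection point, where the coefficient of index `-1` is the
coefficient of index `0`. -/
lemma thetaCoeff_succ_zero {Q : ℝ} (h0 : 0 < Q) (h1 : Q < 1) (N : ℕ) :
    thetaCoeff Q (N + 1) 0 = (1 + Q ^ (2 * (N + 1))) * thetaCoeff Q N 0
      + Q ^ (N + 1) * (thetaCoeff Q N 0 + thetaCoeff Q N 1) := by
  have a1 : recFac Q ((N : ℤ) - 1) = (1 - Q ^ N) * (qFac Q N)⁻¹ := by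
    rw [recFac_sub_one h0 h1, zpow_natCast]; simp [recFac]
  have a2 : recFac Q ((N : ℤ) - 0) = (qFac Q N)⁻¹ := by simp [recFac]
  have a3 : recFac Q (((N + 1 : ℕ) : ℤ) - 0) = (qFac Q (N + 1))⁻¹ := by
    simp [recFac]; omega
  have c1 : qFac Q (2 * (N + 1) + 1) = qFac Q (2 * N + 1) * (1 - Q ^ (2 * N + 2)) *
      (1 - Q ^ (2 * N + 3)) := by
    rw [show 2 * (N + 1) + 1 = 2 * N + 1 + 1 + 1 by ring, qFac_succ, qFac_succ]
  unfold thetaCoeff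
  rw [c1, triIdx_succ 0]
  have t0 : triIdx 0 = 0 := by simp [triIdx]
  simp only [t0, Nat.cast_zero, Nat.cast_one, a1, a2, a3, add_zero]
  rw [qFac_succ Q (N + 1), qFac_succ Q N]
  have hE := (qFac_pos h0 h1 N).ne'
  have h2 : 1 - Q ^ (N + 1) ≠ 0 := (one_sub_pow_pos h0 h1 N).ne'
  have h3 : 1 - Q ^ (N + 1 + 1) ≠ 0 := (one_sub_pow_pos h0 h1 (N + 1)).ne'
  generalize qFac Q N = E at *
  generalize qFac Q (2 * N + 1) = F at *
  field_simp
  ring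

lemma thetaCoeff_eq_zero {Q : ℝ} {N n : ℕ} (h : N < n) : thetaCoeff Q N n = 0 := by
  simp [thetaCoeff, recFac, show ¬ (n : ℤ) ≤ N by omega]

lemma two_cos_mul_sin (z : ℝ) (n : ℕ) :
    2 * Real.cos (2 * z) * Real.sin ((2 * ((n + 1 : ℕ) : ℝ) + 1) * z) =
      Real.sin ((2 * ((n + 2 : ℕ) : ℝ) + 1) * z) + Real.sin ((2 * (n : ℝ) + 1) * z) := by
  have e1 : (2 * ((n + 2 : ℕ) : ℝ) + 1) * z = (2 * ((n + 1 : ℕ) : ℝ) + 1) * z + 2 * z := by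
    push_cast; ring
  have e2 : (2 * (n : ℝ) + 1) * z = (2 * ((n + 1 : ℕ) : ℝ) + 1) * z - 2 * z := by
    push_cast; ring
  rw [e1, e2, Real.sin_add, Real.sin_sub]; ring

/-- One step of the product, with the boundary term of the truncated sine sum made explicit. -/
lemma theta_step {Q : ℝ} (h0 : 0 < Q) (h1 : Q < 1) (z : ℝ) (N K : ℕ) :
    (1 - 2 * Q ^ (N + 1) * Real.cos (2 * z) + Q ^ (2 * (N + 1))) *
      ∑ n ∈ Finset.range (K + 1), (-1) ^ n * thetaCoeff Q N n * Real.sin ((2 * (n : ℝ) + 1) * z)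
    = ∑ n ∈ Finset.range (K + 1),
        (-1) ^ n * thetaCoeff Q (N + 1) n * Real.sin ((2 * (n : ℝ) + 1) * z)
      - (-1) ^ K * Q ^ (N + 1) * (thetaCoeff Q N K * Real.sin ((2 * ((K + 1 : ℕ) : ℝ) + 1) * z)
        + thetaCoeff Q N (K + 1) * Real.sin ((2 * (K : ℝ) + 1) * z)) := by
  induction K with
  | zero =>
    simp only [zero_add, Finset.sum_range_one, thetaCoeff_succ_zero h0 h1, Nat.cast_zero]
    have e1 : (2 * ((1 : ℕ) : ℝ) + 1) * z = z + 2 * z := by push_cast; ring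
    have e2 : 2 * Real.cos (2 * z) * Real.sin z = Real.sin (z + 2 * z) - Real.sin z := by
      have : Real.sin z = Real.sin (2 * z - z) := by congr 1; ring
      rw [Real.sin_add]
      nth_rw 3 [this]
      rw [Real.sin_sub]; ring
    rw [e1]
    simp only [mul_zero, zero_add, one_mul]
    linear_combination (-Q ^ (N + 1) * thetaCoeff Q N 0) * e2
  | succ K ih =>
    rw [Finset.sum_range_succ, mul_add, ih, Finset.sum_range_succ _ (K + 1),
      thetaCoeff_succ h0 h1]
    have := two_cos_mul_sin z K
    linear_combination (-Q ^ (N + 1) * (-1) ^ (K + 1) * thetaCoeff Q N (K + 1)) * this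

/-- Finite Jacobi triple product for `θ₁`. -/
lemma theta_finite {Q : ℝ} (h0 : 0 < Q) (h1 : Q < 1) (z : ℝ) (N : ℕ) :
    ∑ n ∈ Finset.range (N + 1),
        (-1) ^ n * thetaCoeff Q N n * Real.sin ((2 * (n : ℝ) + 1) * z)
      = Real.sin z * ∏ k ∈ Finset.range N,
        (1 - 2 * Q ^ (k + 1) * Real.cos (2 * z) + Q ^ (2 * (k + 1))) := by
  induction N with
  | zero =>
    have : (1 - Q) ≠ 0 := by linarith
    simp [thetaCoeff, triIdx, recFac, qFac, this]
  | succ N ih =>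
    have h := theta_step h0 h1 z N (N + 1)
    rw [thetaCoeff_eq_zero (show N < N + 1 by omega),
      thetaCoeff_eq_zero (show N < N + 1 + 1 by omega),
      Finset.sum_range_succ _ (N + 1), thetaCoeff_eq_zero (show N < N + 1 by omega), ih] at h
    rw [Finset.prod_range_succ]
    linear_combination -h

/-- `∏ (1 - Q^k)` does not diverge to `0`: from `log (1 - q) ≥ -q / (1 - q)`. -/
lemma qFac_lower {Q : ℝ} (h0 : 0 < Q) (h1 : Q < 1) : ∃ δ > 0, ∀ j, δ ≤ qFac Q j := by
  refine ⟨Real.exp (-(1 / (1 - Q) * (1 / (1 - Q)))), Real.exp_pos _, fun j => ?_⟩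
  have key : ∀ j, Real.exp (-(1 / (1 - Q) * ∑ k ∈ Finset.range j, Q ^ k)) ≤ qFac Q j := by
    intro j
    induction j with
    | zero => simp [qFac]
    | succ j ih =>
      rw [qFac_succ, Finset.sum_range_succ, mul_add, neg_add, Real.exp_add]
      refine mul_le_mul ih ?_ (Real.exp_pos _).le (qFac_pos h0 h1 j).le
      have hp := one_sub_pow_pos h0 h1 j
      rw [← Real.le_log_iff_exp_le hp]
      refine le_trans ?_ (Real.one_sub_inv_le_log_of_pos hp)
      have e : 1 - (1 - Q ^ (j + 1))⁻¹ = -(Q ^ (j + 1) / (1 - Q ^ (j + 1))) := by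
        field_simp; ring
      rw [e, neg_le_neg_iff, one_div_mul_eq_div]
      have hq : Q ^ (j + 1) ≤ Q ^ j := pow_le_pow_of_le_one h0.le h1.le (by omega)
      have hq' : Q ^ (j + 1) ≤ Q := by
        simpa using pow_le_pow_of_le_one h0.le h1.le (show 1 ≤ j + 1 by omega)
      exact div_le_div₀ (by positivity) hq (by linarith) (by linarith)
  refine le_trans ?_ (key j)
  rw [Real.exp_le_exp, neg_le_neg_iff]
  have h2 : 0 < 1 - Q := by linarith
  refine mul_le_mul_of_nonneg_left ?_ (by positivity)
  have := (summable_geometric_of_lt_one h0.le h1).sum_le_tsum (Finset.range j)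
    (fun i _ => by positivity)
  rwa [tsum_geometric_of_lt_one h0.le h1, ← one_div] at this

lemma summable_pow_triIdx {Q : ℝ} (h0 : 0 < Q) (h1 : Q < 1) :
    Summable fun n => Q ^ triIdx n := by
  refine Summable.of_nonneg_of_le (fun n => by positivity) (fun n => ?_)
    (summable_geometric_of_lt_one h0.le h1)
  refine pow_le_pow_of_le_one h0.le h1.le ?_
  cases n with
  | zero => simp
  | succ k => rw [triIdx_succ]; omega

/-- Positivity of `θ₁` on `sin z ≥ 0`, in quantitative form: the series dominates a positive
multiple of `sin z`. This is the limit `N → ∞` of `theta_finite`, every factor of the product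
being at least `(1 - Q^{k+1})²`. -/
lemma theta_lower {Q : ℝ} (h0 : 0 < Q) (h1 : Q < 1) : ∃ c > 0, ∀ z, 0 ≤ Real.sin z →
    c * Real.sin z ≤ ∑' n : ℕ, (-1) ^ n * Q ^ triIdx n * Real.sin ((2 * (n : ℝ) + 1) * z) := by
  obtain ⟨δ, hδ, hle⟩ := qFac_lower h0 h1
  have hbdd : BddBelow (range (qFac Q)) := ⟨δ, by rintro _ ⟨j, rfl⟩; exact hle j⟩
  obtain ⟨L, hL⟩ : ∃ L, Tendsto (qFac Q) atTop (𝓝 L) :=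
    ⟨_, tendsto_atTop_ciInf (qFac_antitone h0 h1) hbdd⟩
  have hLδ : δ ≤ L := ge_of_tendsto' hL hle
  have hLpos : 0 < L := hδ.trans_le hLδ
  refine ⟨L * δ ^ 2, by positivity, fun z hz => ?_⟩
  have lim : Tendsto (fun N => ∑' n : ℕ,
      (-1) ^ n * thetaCoeff Q N n * Real.sin ((2 * (n : ℝ) + 1) * z)) atTop
      (𝓝 (∑' n : ℕ, (-1) ^ n * (Q ^ triIdx n * L * L⁻¹ / L) *
        Real.sin ((2 * (n : ℝ) + 1) * z))) := by
    refine tendsto_tsum_of_dominated_convergence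
      (bound := fun n => Q ^ triIdx n * (1 * δ⁻¹ / δ))
      ((summable_pow_triIdx h0 h1).mul_right _) (fun n => ?_) (Eventually.of_forall fun N n => ?_)
    · refine Tendsto.mul_const _ (Tendsto.const_mul _ ?_)
      have r1 : Tendsto (fun N : ℕ => qFac Q (2 * N + 1)) atTop (𝓝 L) :=
        hL.comp (tendsto_atTop_mono (fun N => by simp only [id]; omega) tendsto_id)
      have r2 : Tendsto (fun N : ℕ => qFac Q (N + n + 1)) atTop (𝓝 L) :=
        hL.comp (tendsto_atTop_mono (fun N => by simp only [id]; omega) tendsto_id)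
      have r3 : Tendsto (fun N : ℕ => recFac Q ((N : ℤ) - n)) atTop (𝓝 L⁻¹) := by
        have : Tendsto (fun N : ℕ => (qFac Q (N - n))⁻¹) atTop (𝓝 L⁻¹) :=
          (hL.comp (tendsto_sub_atTop_nat n)).inv₀ hLpos.ne'
        refine this.congr' ?_
        filter_upwards [eventually_ge_atTop n] with N hN
        rw [recFac, if_pos (by omega)]
        congr 2; omega
      exact ((r1.const_mul _).mul r3).div r2 hLpos.ne'
    · have hs := Real.abs_sin_le_one ((2 * (n : ℝ) + 1) * z)
      have hrec : |recFac Q ((N : ℤ) - n)| ≤ δ⁻¹ := by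
        unfold recFac
        split_ifs
        · rw [abs_of_nonneg (inv_nonneg.2 (qFac_pos h0 h1 _).le)]
          exact inv_anti₀ hδ (hle _)
        · simpa using hδ.le
      have hq1 : qFac Q (2 * N + 1) ≤ 1 := by
        simpa [qFac] using qFac_antitone h0 h1 (Nat.zero_le (2 * N + 1))
      have hp := qFac_pos h0 h1 (2 * N + 1)
      have hp2 := qFac_pos h0 h1 (N + n + 1)
      have hA : |thetaCoeff Q N n| ≤ Q ^ triIdx n * (1 * δ⁻¹ / δ) := by
        unfold thetaCoeff
        rw [abs_div, abs_mul, abs_mul, abs_of_pos hp, abs_of_pos hp2,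
          abs_of_pos (show 0 < Q ^ triIdx n by positivity), mul_assoc, mul_div_assoc]
        gcongr
        exact hle _
      rw [Real.norm_eq_abs, abs_mul, abs_mul, abs_pow, abs_neg, abs_one, one_pow, one_mul]
      calc _ ≤ Q ^ triIdx n * (1 * δ⁻¹ / δ) * 1 := by gcongr
        _ = _ := mul_one _
  have fin : ∀ N, δ ^ 2 * Real.sin z ≤ ∑' n : ℕ,
      (-1) ^ n * thetaCoeff Q N n * Real.sin ((2 * (n : ℝ) + 1) * z) := by
    intro N
    rw [tsum_eq_sum (s := Finset.range (N + 1)) (fun n hn => by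
      rw [thetaCoeff_eq_zero (by simpa using hn)]; simp), theta_finite h0 h1]
    have : δ ^ 2 ≤ ∏ k ∈ Finset.range N,
        (1 - 2 * Q ^ (k + 1) * Real.cos (2 * z) + Q ^ (2 * (k + 1))) := by
      calc δ ^ 2 ≤ qFac Q N ^ 2 := by have := hle N; gcongr
        _ = ∏ k ∈ Finset.range N, (1 - Q ^ (k + 1)) ^ 2 := by
          rw [qFac, Finset.prod_pow]
        _ ≤ _ := by
          refine Finset.prod_le_prod (fun _ _ => sq_nonneg _) fun k _ => ?_
          have := Real.cos_le_one (2 * z)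
          have h3 : 0 < Q ^ (k + 1) := by positivity
          rw [show Q ^ (2 * (k + 1)) = (Q ^ (k + 1)) ^ 2 by rw [← pow_mul]; ring_nf]
          nlinarith
    rw [mul_comm]
    exact mul_le_mul_of_nonneg_left this hz
  have h := ge_of_tendsto' lim fin
  have e : (∑' n : ℕ, (-1) ^ n * (Q ^ triIdx n * L * L⁻¹ / L) *
        Real.sin ((2 * (n : ℝ) + 1) * z)) = L⁻¹ *
      ∑' n : ℕ, (-1) ^ n * Q ^ triIdx n * Real.sin ((2 * (n : ℝ) + 1) * z) := by
    rw [← tsum_mul_left]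
    refine tsum_congr fun n => ?_
    field_simp
  rw [e] at h
  have h' := mul_le_mul_of_nonneg_left h hLpos.le
  rw [← mul_assoc L L⁻¹, mul_inv_cancel₀ hLpos.ne', one_mul] at h'
  linarith

/-! ### The frequencies `mₙ` and symmetries of `W` -/

lemma mIdx_cast (n : ℕ) : (mIdx n : ℝ) = 4 * n + 2 := by simp [mIdx]

lemma mIdx_pos (n : ℕ) : (0 : ℝ) < mIdx n := by rw [mIdx_cast]; positivity

lemma mIdx_sq_sub_pos (n : ℕ) : (0 : ℝ) < (mIdx n : ℝ) ^ 2 - 1 := by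
  rw [mIdx_cast]; nlinarith [(Nat.cast_nonneg n : (0 : ℝ) ≤ n)]

lemma mIdx_inj : Function.Injective mIdx := fun a b h => by simpa [mIdx] using h

lemma mIdx_sq_inj : Function.Injective fun n => mIdx n ^ 2 :=
  (Nat.pow_left_injective (by norm_num : 2 ≠ 0)).comp mIdx_inj

lemma one_le_mIdx_sq (n : ℕ) : 1 ≤ mIdx n ^ 2 := Nat.one_le_pow _ _ (by simp [mIdx])

lemma mIdx_sq_sub_inj : Function.Injective fun n => mIdx n ^ 2 - 1 := fun a b h =>
  mIdx_sq_inj (by have := one_le_mIdx_sq a; have := one_le_mIdx_sq b; simp only at h ⊢; omega)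

lemma summable_inv_sq_sub : Summable fun n => 1 / ((mIdx n : ℝ) ^ 2 - 1) := by
  have h : Summable fun n : ℕ => 1 / ((n : ℝ) + 1) ^ 2 := by
    have := (summable_nat_add_iff 1).2 (Real.summable_one_div_nat_pow.2 (by norm_num : 1 < 2))
    simpa using this
  refine Summable.of_nonneg_of_le (fun n => (one_div_pos.2 (mIdx_sq_sub_pos n)).le) (fun n => ?_) h
  refine one_div_le_one_div_of_le (by positivity) ?_
  rw [mIdx_cast]; nlinarith [(Nat.cast_nonneg n : (0 : ℝ) ≤ n)]

lemma inv_sq_sub_mul_le (n : ℕ) :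
    1 / (((mIdx n : ℝ) ^ 2 - 1) * mIdx n) ≤ 1 / ((mIdx n : ℝ) ^ 2 - 1) := by
  have h := mIdx_sq_sub_pos n
  refine one_div_le_one_div_of_le h ?_
  have : (1 : ℝ) ≤ mIdx n := by rw [mIdx_cast]; nlinarith [(Nat.cast_nonneg n : (0 : ℝ) ≤ n)]
  nlinarith

lemma inv_sq_sub_le_one (n : ℕ) : 1 / ((mIdx n : ℝ) ^ 2 - 1) ≤ 1 := by
  rw [div_le_one (mIdx_sq_sub_pos n), mIdx_cast]; nlinarith [(Nat.cast_nonneg n : (0 : ℝ) ≤ n)]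

lemma mIdx_div_le_one (n : ℕ) : (mIdx n : ℝ) / ((mIdx n : ℝ) ^ 2 - 1) ≤ 1 := by
  rw [div_le_one (mIdx_sq_sub_pos n), mIdx_cast]; nlinarith [(Nat.cast_nonneg n : (0 : ℝ) ≤ n)]

lemma mIdx_trig (n : ℕ) : Real.sin (mIdx n * (π / 4)) = (-1) ^ n ∧
    Real.cos (mIdx n * (π / 4)) = 0 := by
  have e : (mIdx n : ℝ) * (π / 4) = π / 2 + n * π := by rw [mIdx_cast]; ring
  rw [e, Real.sin_add_nat_mul_pi, Real.cos_add_nat_mul_pi]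
  simp

lemma sin_mIdx_shift (n : ℕ) (φ : ℝ) :
    Real.sin (mIdx n * (π / 4 + φ)) = (-1) ^ n * Real.cos (mIdx n * φ) := by
  rw [mul_add, Real.sin_add, (mIdx_trig n).1, (mIdx_trig n).2]; ring

lemma cos_mIdx_shift (n : ℕ) (φ : ℝ) :
    Real.cos (mIdx n * (π / 4 + φ)) = -((-1) ^ n * Real.sin (mIdx n * φ)) := by
  rw [mul_add, Real.cos_add, (mIdx_trig n).1, (mIdx_trig n).2]; ring

lemma W_symm (r φ : ℝ) : W r (π / 4 - φ) = W r (π / 4 + φ) := by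
  unfold W
  simp only [sub_eq_add_neg, sin_mIdx_shift, mul_neg, Real.cos_neg]

lemma W_zero (θ : ℝ) : W 0 θ = 0 := by
  unfold W
  simp [show ∀ n, mIdx n ≠ 0 by intro n; simp [mIdx]]

/-! ### Lacunary power series with bounded coefficients -/

lemma gap_summable {e : ℕ → ℕ} (he : Function.Injective e) {ρ : ℝ} (h0 : 0 < ρ) (h1 : ρ < 1) :
    Summable fun n => (e n : ℝ) * ρ ^ (e n - 1) := by
  have h := ((summable_pow_mul_geometric_of_norm_lt_one 1
    (by rwa [Real.norm_of_nonneg h0.le])).mul_right ρ⁻¹).comp_injective he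
  refine h.congr fun n => ?_
  simp only [Function.comp, pow_one]
  rcases Nat.eq_zero_or_pos (e n) with h | h
  · simp [h]
  · obtain ⟨k, hk⟩ : ∃ k, e n = k + 1 := ⟨e n - 1, by omega⟩
    rw [hk, pow_succ]; field_simp; simp

lemma gap_hasDerivAt {a : ℕ → ℝ} {e : ℕ → ℕ} (ha : ∀ n, |a n| ≤ 1)
    (he : Function.Injective e) {r : ℝ} (hr : |r| < 1) :
    HasDerivAt (fun x => ∑' n, a n * x ^ e n) (∑' n, a n * (e n * r ^ (e n - 1))) r := by
  obtain ⟨ρ, h1, h2⟩ := exists_between hr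
  have h0 : 0 < ρ := (abs_nonneg r).trans_lt h1
  refine hasDerivAt_tsum_of_isPreconnected (t := Ioo (-ρ) ρ) (y₀ := 0)
    (g := fun n x => a n * x ^ e n)
    (gap_summable he h0 h2) isOpen_Ioo isPreconnected_Ioo
    (fun n y _ => (hasDerivAt_pow (e n) y).const_mul (a n)) (fun n y hy => ?_)
    (by constructor <;> linarith) ?_ (abs_lt.1 h1)
  · rw [Real.norm_eq_abs, abs_mul, abs_mul, abs_pow, Nat.abs_cast]
    have hy' : |y| ≤ ρ := (abs_lt.2 hy).le
    calc _ ≤ 1 * ((e n : ℝ) * ρ ^ (e n - 1)) := by gcongr; exact ha n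
      _ = _ := one_mul _
  · -- at most one exponent vanishes, so the series at `0` has finite support
    refine summable_of_hasFiniteSupport (Set.Finite.subset
      (Set.Finite.preimage he.injOn (Set.finite_singleton 0)) fun n hn => ?_)
    by_contra h
    simp only [Set.mem_preimage, Set.mem_singleton_iff] at h
    exact hn (by simp [h])

/-- Analyticity, obtained by restricting the holomorphic sum on the complex unit disc. -/
lemma gap_analytic {a : ℕ → ℝ} {e : ℕ → ℕ} (ha : ∀ n, |a n| ≤ 1)
    (he : Function.Injective e) :
    AnalyticOnNhd ℝ (fun x : ℝ => ∑' n, a n * x ^ e n) (Ioo (-1) 1) := by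
  have hC : DifferentiableOn ℂ (fun z : ℂ => ∑' n, (a n : ℂ) * z ^ e n) (Metric.ball 0 1) := by
    intro z hz
    rw [mem_ball_zero_iff] at hz
    obtain ⟨ρ, h1, h2⟩ := exists_between hz
    have h0 : 0 < ρ := (norm_nonneg z).trans_lt h1
    have hd : DifferentiableOn ℂ (fun z : ℂ => ∑' n, (a n : ℂ) * z ^ e n) (Metric.ball 0 ρ) := by
      refine Complex.differentiableOn_tsum_of_summable_norm (u := fun n => ρ ^ e n)
        ((summable_geometric_of_lt_one h0.le h2).comp_injective he)
        (fun n => by fun_prop) Metric.isOpen_ball fun n w hw => ?_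
      rw [mem_ball_zero_iff] at hw
      rw [norm_mul, norm_pow, Complex.norm_real, Real.norm_eq_abs]
      calc _ ≤ 1 * ρ ^ e n := by gcongr; exact ha n
        _ = _ := one_mul _
    exact (hd.differentiableAt
      (Metric.isOpen_ball.mem_nhds (by simpa using h1))).differentiableWithinAt
  have hA := hC.analyticOnNhd Metric.isOpen_ball
  intro x hx
  have hx' : (x : ℂ) ∈ Metric.ball (0 : ℂ) 1 := by
    simpa [abs_lt] using hx
  have h1 : AnalyticAt ℝ (fun z : ℂ => ∑' n, (a n : ℂ) * z ^ e n) (x : ℂ) :=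
    (hA x hx').restrictScalars
  have h2 : AnalyticAt ℝ (fun y : ℝ => (y : ℂ)) x := Complex.ofRealCLM.analyticAt x
  have h3 := (Complex.reCLM.analyticAt _).comp (h1.comp h2)
  refine h3.congr (Eventually.of_forall fun y => ?_)
  simp only [Function.comp, Complex.reCLM_apply]
  rw [← Complex.ofReal_re (∑' n, a n * y ^ e n), Complex.ofReal_tsum]
  push_cast
  rfl

/-! ### Derivatives of `W` -/

lemma W_hasDerivAt_r (θ : ℝ) {r : ℝ} (hr : |r| < 1) : HasDerivAt (fun x => W x θ)
    ((8 / π) * ∑' n : ℕ, (Real.sin (mIdx n * θ) * ((mIdx n : ℝ) / ((mIdx n : ℝ) ^ 2 - 1)))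
      * r ^ (mIdx n ^ 2 - 1)) r := by
  have h := (gap_hasDerivAt
    (a := fun n => Real.sin (mIdx n * θ) * (1 / (((mIdx n : ℝ) ^ 2 - 1) * mIdx n)))
    (fun n => ?_) mIdx_sq_inj hr).const_mul (8 / π)
  · refine (h.congr_deriv ?_).congr_of_eventuallyEq (Eventually.of_forall fun x => ?_)
    · congr 1
      refine tsum_congr fun n => ?_
      have := (mIdx_pos n).ne'
      have := (mIdx_sq_sub_pos n).ne'
      push_cast
      field_simp
    · unfold W
      simp only
      congr 1
      exact tsum_congr fun n => by ring
  · have h1 := mIdx_sq_sub_pos n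
    have h2 := mIdx_pos n
    rw [abs_mul, abs_of_pos (by positivity : 0 < 1 / (((mIdx n : ℝ) ^ 2 - 1) * mIdx n))]
    exact mul_le_one₀ (Real.abs_sin_le_one _) (by positivity)
      ((inv_sq_sub_mul_le n).trans (inv_sq_sub_le_one n))

lemma Wr4_eq {r : ℝ} (hr : |r| < 1) : Wr4 r = (8 / π) * ∑' n : ℕ,
    (-1) ^ n * ((mIdx n : ℝ) / ((mIdx n : ℝ) ^ 2 - 1)) * r ^ (mIdx n ^ 2 - 1) := by
  rw [Wr4, (W_hasDerivAt_r _ hr).deriv]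
  simp only [(mIdx_trig _).1]

lemma abs_coeff_le (n : ℕ) : |(-1) ^ n * ((mIdx n : ℝ) / ((mIdx n : ℝ) ^ 2 - 1))| ≤ 1 := by
  have h1 := mIdx_sq_sub_pos n
  have h2 := mIdx_pos n
  rw [abs_mul, abs_pow, abs_neg, abs_one, one_pow, one_mul, abs_of_pos (by positivity)]
  exact mIdx_div_le_one n

lemma Wr4_analytic : AnalyticOnNhd ℝ Wr4 (Ioo (-1) 1) := by
  refine AnalyticOnNhd.congr isOpen_Ioo
    ((gap_analytic abs_coeff_le mIdx_sq_sub_inj).fun_const_smul (c := 8 / π)) fun r hr => ?_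
  simp only [smul_eq_mul]
  rw [Wr4_eq (abs_lt.2 hr)]

lemma W4_analytic : AnalyticOnNhd ℝ (fun r => W r (π / 4)) (Ioo (-1) 1) := by
  refine AnalyticOnNhd.congr isOpen_Ioo
    ((gap_analytic (a := fun n => (-1) ^ n * (1 / (((mIdx n : ℝ) ^ 2 - 1) * mIdx n)))
      (fun n => ?_) mIdx_sq_inj).fun_const_smul (c := 8 / π)) fun r hr => ?_
  · have h1 := mIdx_sq_sub_pos n
    have h2 := mIdx_pos n
    rw [abs_mul, abs_pow, abs_neg, abs_one, one_pow, one_mul, abs_of_pos (by positivity)]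
    exact (inv_sq_sub_mul_le n).trans (inv_sq_sub_le_one n)
  · simp only [smul_eq_mul]
    unfold W
    congr 1
    refine tsum_congr fun n => ?_
    rw [(mIdx_trig n).1]; ring

lemma W4_hasDerivAt {r : ℝ} (hr : |r| < 1) : HasDerivAt (fun x => W x (π / 4)) (Wr4 r) r := by
  have h := W_hasDerivAt_r (π / 4) hr
  rw [Wr4, h.deriv]; exact h

lemma Wr4_hasDerivAt {r : ℝ} (hr : |r| < 1) : HasDerivAt Wr4
    ((8 / π) * ∑' n : ℕ, (-1) ^ n * (mIdx n : ℝ) * r ^ (mIdx n ^ 2 - 2)) r := by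
  have h := (gap_hasDerivAt abs_coeff_le mIdx_sq_sub_inj hr).const_mul (8 / π)
  refine (h.congr_deriv ?_).congr_of_eventuallyEq ?_
  · congr 1
    refine tsum_congr fun n => ?_
    have := (mIdx_sq_sub_pos n).ne'
    rw [Nat.sub_sub, Nat.cast_sub (one_le_mIdx_sq n)]
    push_cast
    field_simp
  · filter_upwards [isOpen_Ioo.mem_nhds (abs_lt.1 hr)] with x hx
    exact Wr4_eq (abs_lt.2 hx)

lemma W_hasDerivAt_θ {r : ℝ} (h0 : 0 ≤ r) (h1 : r ≤ 1) (θ : ℝ) : HasDerivAt (fun t => W r t)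
    ((8 / π) * ∑' n : ℕ, r ^ (mIdx n ^ 2) * Real.cos (mIdx n * θ) / ((mIdx n : ℝ) ^ 2 - 1)) θ := by
  have hr : ∀ n, r ^ (mIdx n ^ 2) ≤ 1 := fun n => pow_le_one₀ h0 h1
  refine HasDerivAt.const_mul (8 / π) (hasDerivAt_tsum (g := fun n t =>
      r ^ (mIdx n ^ 2) * Real.sin (mIdx n * t) / (((mIdx n : ℝ) ^ 2 - 1) * mIdx n))
    (g' := fun n t => r ^ (mIdx n ^ 2) * Real.cos (mIdx n * t) / ((mIdx n : ℝ) ^ 2 - 1))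
    (y₀ := 0) summable_inv_sq_sub (fun n y => ?_) (fun n y => ?_) (by simp) θ)
  · have := (mIdx_pos n).ne'
    have := (mIdx_sq_sub_pos n).ne'
    refine ((((hasDerivAt_id y).const_mul (mIdx n : ℝ)).sin.const_mul
      (r ^ (mIdx n ^ 2))).div_const _).congr_deriv ?_
    simp only [id]
    field_simp
  · have hp := mIdx_sq_sub_pos n
    rw [Real.norm_eq_abs, abs_div, abs_mul, abs_of_pos hp, abs_of_nonneg (pow_nonneg h0 _)]
    gcongr
    exact mul_le_one₀ (hr n) (abs_nonneg _) (Real.abs_cos_le_one _)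

lemma W_continuous : Continuous fun p : ℝ × Icc (0 : ℝ) 1 => W p.2 p.1 := by
  unfold W
  refine Continuous.mul continuous_const (continuous_tsum (fun n => by fun_prop)
    summable_inv_sq_sub fun n p => ?_)
  have hp := mIdx_sq_sub_pos n
  have hm := mIdx_pos n
  have h0 := p.2.2.1
  rw [Real.norm_eq_abs, abs_div, abs_mul, abs_of_pos (mul_pos hp hm),
    abs_of_nonneg (pow_nonneg h0 _)]
  refine le_trans ?_ (inv_sq_sub_mul_le n)
  gcongr
  exact mul_le_one₀ (pow_le_one₀ h0 p.2.2.2) (abs_nonneg _) (Real.abs_sin_le_one _)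

lemma W4_continuousOn : ContinuousOn (fun r => W r (π / 4)) (Icc 0 1) := by
  rw [continuousOn_iff_continuous_domRestrict]
  exact W_continuous.comp (by fun_prop : Continuous fun r : Icc (0 : ℝ) 1 => (π / 4, r))

/-! ### The boundary values `W(1,θ) = cos θ + sin θ - 1` -/

lemma tsum_odd_eq {f : ℕ → ℝ} (hf : Summable f) :
    ∑' n, f (2 * n + 1) = ∑' n, f n - ∑' n, f (2 * n) := by
  have h := tsum_even_add_odd (f := f)
    (hf.comp_injective (i := fun n => 2 * n) (fun a b h => by simpa using h))
    (hf.comp_injective (i := fun n => 2 * n + 1) (fun a b h => by simpa using h))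
  linarith

/-- The second Bernoulli polynomial `B₂(x)` has cosine coefficients `1/n²`; combining its Fourier
series at `θ/π` and `2θ/π` isolates the odd `n`, that is, the frequencies `mₙ = 2 (2n + 1)`. -/
lemma sum_cos_sq {θ : ℝ} (hθ : θ ∈ Icc 0 (π / 2)) :
    (8 / π) * ∑' n : ℕ, Real.cos (mIdx n * θ) / (mIdx n : ℝ) ^ 2 = π / 4 - θ := by
  have hπ := Real.pi_pos
  have hB : ∀ x ∈ Icc (0 : ℝ) 1, HasSum (fun n : ℕ => 1 / (n : ℝ) ^ 2 * Real.cos (2 * π * n * x))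
      (π ^ 2 * (x ^ 2 - x + 1 / 6)) := by
    intro x hx
    have h := hasSum_one_div_nat_pow_mul_cos one_ne_zero hx
    have e : (Polynomial.map (algebraMap ℚ ℝ) (Polynomial.bernoulli (2 * 1))).eval x
        = x ^ 2 - x + 1 / 6 := by
      have b2 : bernoulli 2 = 1 / 6 := by
        rw [bernoulli_eq_bernoulli'_of_ne_one (by norm_num), bernoulli'_two]
      simp [Polynomial.bernoulli, Finset.sum_range_succ, b2, Polynomial.eval_monomial]
      ring
    rw [e] at h
    convert h using 1
    simp
    ring
  have h1 := hB (θ / π) ⟨by have := hθ.1; positivity, by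
    rw [div_le_one hπ]; linarith [hθ.2]⟩
  have h2 := hB (2 * (θ / π)) ⟨by have := hθ.1; positivity, by
    rw [← mul_div_assoc, div_le_one hπ]; linarith [hθ.2]⟩
  have hE := (h2.mul_left (1 / 4 : ℝ))
  set f : ℕ → ℝ := fun n => 1 / (n : ℝ) ^ 2 * Real.cos (2 * π * n * (θ / π)) with hf
  have hev : ∀ n, f (2 * n) = 1 / 4 * (1 / (n : ℝ) ^ 2 * Real.cos (2 * π * n * (2 * (θ / π)))) := by
    intro n
    have : 2 * π * ((2 * n : ℕ) : ℝ) * (θ / π) = 2 * π * n * (2 * (θ / π)) := by push_cast; ring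
    simp only [hf, this]
    push_cast
    ring
  have hod : ∀ n, f (2 * n + 1) = 4 * (Real.cos (mIdx n * θ) / (mIdx n : ℝ) ^ 2) := by
    intro n
    have : 2 * π * ((2 * n + 1 : ℕ) : ℝ) * (θ / π) = mIdx n * θ := by
      rw [mIdx_cast]; push_cast; field_simp; ring
    simp only [hf, this]
    rw [mIdx_cast]
    push_cast
    field_simp
    ring
  -- the odd-index part is the full series minus its even-index part
  have hsplit := tsum_odd_eq h1.summable
  rw [h1.tsum_eq, tsum_congr hev, hE.tsum_eq, tsum_congr hod, tsum_mul_left] at hsplit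
  have : ∑' n : ℕ, Real.cos (mIdx n * θ) / (mIdx n : ℝ) ^ 2 =
      (π ^ 2 * ((θ / π) ^ 2 - θ / π + 1 / 6)
        - 1 / 4 * (π ^ 2 * ((2 * (θ / π)) ^ 2 - 2 * (θ / π) + 1 / 6))) / 4 := by
    linarith only [hsplit]
  rw [this]
  field_simp
  ring

/-- `W_θ(1,θ)`, split as its explicit affine part plus a series that can be differentiated
termwise. -/
noncomputable def bdrySlope (θ : ℝ) : ℝ := (π / 4 - θ) +
  (8 / π) * ∑' n : ℕ, Real.cos (mIdx n * θ) / ((mIdx n : ℝ) ^ 2 * ((mIdx n : ℝ) ^ 2 - 1))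

lemma bdry_term_le (n : ℕ) : 1 / ((mIdx n : ℝ) ^ 2 * ((mIdx n : ℝ) ^ 2 - 1)) ≤
    1 / ((mIdx n : ℝ) ^ 2 - 1) := by
  have h := mIdx_sq_sub_pos n
  exact one_div_le_one_div_of_le h (by nlinarith)

lemma W_one_hasDerivAt {θ : ℝ} (hθ : θ ∈ Icc 0 (π / 2)) :
    HasDerivAt (fun t => W 1 t) (bdrySlope θ) θ := by
  refine (W_hasDerivAt_θ zero_le_one le_rfl θ).congr_deriv ?_
  rw [bdrySlope, ← sum_cos_sq hθ, ← mul_add]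
  have hb : ∀ n, |Real.cos (mIdx n * θ)| ≤ 1 := fun n => Real.abs_cos_le_one _
  have s2 : Summable fun n : ℕ =>
      Real.cos (mIdx n * θ) / ((mIdx n : ℝ) ^ 2 * ((mIdx n : ℝ) ^ 2 - 1)) := by
    refine Summable.of_norm_bounded summable_inv_sq_sub fun n => ?_
    have h := mIdx_sq_sub_pos n
    have h' := mIdx_pos n
    rw [Real.norm_eq_abs, abs_div, abs_of_pos (mul_pos (pow_pos h' 2) h)]
    exact (div_le_div_of_nonneg_right (hb n) (by positivity)).trans (bdry_term_le n)
  have s1 : Summable fun n : ℕ => Real.cos (mIdx n * θ) / (mIdx n : ℝ) ^ 2 := by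
    refine Summable.of_norm_bounded summable_inv_sq_sub fun n => ?_
    have h := mIdx_sq_sub_pos n
    have h' := mIdx_pos n
    rw [Real.norm_eq_abs, abs_div, abs_of_pos (a := (mIdx n : ℝ) ^ 2) (by positivity)]
    exact div_le_div₀ zero_le_one (hb n) h (by linarith)
  rw [← s1.tsum_add s2]
  congr 1
  refine tsum_congr fun n => ?_
  have := (mIdx_pos n).ne'
  have := (mIdx_sq_sub_pos n).ne'
  rw [one_pow]
  field_simp
  ring

lemma bdrySlope_hasDerivAt (θ : ℝ) : HasDerivAt bdrySlope (-1 - W 1 θ) θ := by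
  have h : HasDerivAt (fun t => ∑' n : ℕ,
      Real.cos (mIdx n * t) / ((mIdx n : ℝ) ^ 2 * ((mIdx n : ℝ) ^ 2 - 1)))
      (∑' n : ℕ, -(Real.sin (mIdx n * θ) / (((mIdx n : ℝ) ^ 2 - 1) * mIdx n))) θ := by
    refine hasDerivAt_tsum (y₀ := π / 4)
      (g := fun n t => Real.cos (mIdx n * t) / ((mIdx n : ℝ) ^ 2 * ((mIdx n : ℝ) ^ 2 - 1)))
      (g' := fun n t => -(Real.sin (mIdx n * t) / (((mIdx n : ℝ) ^ 2 - 1) * mIdx n)))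
      summable_inv_sq_sub (fun n y => ?_) (fun n y => ?_) (by simp [(mIdx_trig _).2]) θ
    · have := (mIdx_pos n).ne'
      have := (mIdx_sq_sub_pos n).ne'
      refine (((hasDerivAt_id y).const_mul (mIdx n : ℝ)).cos.div_const _).congr_deriv ?_
      simp only [id]
      field_simp
    · have h := mIdx_sq_sub_pos n
      have h' := mIdx_pos n
      rw [norm_neg, Real.norm_eq_abs, abs_div, abs_of_pos (mul_pos h h')]
      exact (div_le_div_of_nonneg_right (Real.abs_sin_le_one _) (by positivity)).trans
        (inv_sq_sub_mul_le n)
  have h2 := ((hasDerivAt_id θ).const_sub (π / 4)).add (h.const_mul (8 / π))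
  refine h2.congr_deriv ?_
  rw [tsum_neg, W]
  simp only [one_pow, one_mul]
  ring

/-- The boundary datum: `w = W(1,·)` solves `w'' = -1 - w` with `w(0) = w(π/2) = 0`, and the two
first integrals of `y'' = -y` identify it. -/
lemma W_one {θ : ℝ} (hθ : θ ∈ Icc 0 (π / 2)) : W 1 θ = Real.cos θ + Real.sin θ - 1 := by
  have hπ := Real.pi_pos
  have hD : ∀ t ∈ Icc 0 (π / 2), HasDerivAt
      (fun t => W 1 t + 1 - Real.cos t - Real.sin t) (bdrySlope t + Real.sin t - Real.cos t) t := by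
    intro t ht
    refine ((((W_one_hasDerivAt ht).add_const 1).sub (Real.hasDerivAt_cos t)).sub
      (Real.hasDerivAt_sin t)).congr_deriv ?_
    ring
  have hD2 : ∀ t, HasDerivAt (fun t => bdrySlope t + Real.sin t - Real.cos t)
      (-(W 1 t + 1 - Real.cos t - Real.sin t)) t := by
    intro t
    refine (((bdrySlope_hasDerivAt t).add (Real.hasDerivAt_sin t)).sub
      (Real.hasDerivAt_cos t)).congr_deriv ?_
    ring
  set y := fun t => W 1 t + 1 - Real.cos t - Real.sin t with hy
  set y' := fun t => bdrySlope t + Real.sin t - Real.cos t with hy'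
  have y0 : y 0 = 0 := by simp [hy, W]
  have y1 : y (π / 2) = 0 := by
    have := W_symm 1 (π / 4)
    rw [sub_self, show π / 4 + π / 4 = π / 2 by ring] at this
    have h0 : W 1 0 = 0 := by simp [W]
    simp [hy, ← this, h0]
  have c1 : ∀ t ∈ Icc 0 (π / 2), y t * Real.cos t - y' t * Real.sin t =
      y 0 * Real.cos 0 - y' 0 * Real.sin 0 := by
    have hd : ∀ t ∈ Icc 0 (π / 2),
        HasDerivAt (fun t => y t * Real.cos t - y' t * Real.sin t) 0 t := fun t ht => by
      refine (((hD t ht).mul (Real.hasDerivAt_cos t)).sub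
        ((hD2 t).mul (Real.hasDerivAt_sin t))).congr_deriv ?_
      simp only [hy, hy']; ring
    exact constant_of_has_deriv_right_zero
      (fun t ht => (hd t ht).continuousAt.continuousWithinAt)
      (fun t ht => (hd t ⟨ht.1, ht.2.le⟩).hasDerivWithinAt)
  have c2 : ∀ t ∈ Icc 0 (π / 2), y t * Real.sin t + y' t * Real.cos t =
      y 0 * Real.sin 0 + y' 0 * Real.cos 0 := by
    have hd : ∀ t ∈ Icc 0 (π / 2),
        HasDerivAt (fun t => y t * Real.sin t + y' t * Real.cos t) 0 t := fun t ht => by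
      refine (((hD t ht).mul (Real.hasDerivAt_sin t)).add
        ((hD2 t).mul (Real.hasDerivAt_cos t))).congr_deriv ?_
      simp only [hy, hy']; ring
    exact constant_of_has_deriv_right_zero
      (fun t ht => (hd t ht).continuousAt.continuousWithinAt)
      (fun t ht => (hd t ⟨ht.1, ht.2.le⟩).hasDerivWithinAt)
  have e1 := c1 θ hθ
  have e2 := c2 θ hθ
  -- the condition at `π/2` forces `y' 0 = 0`
  have e3 := c2 (π / 2) ⟨by positivity, le_rfl⟩
  rw [y0] at e1 e2 e3
  rw [y1] at e3
  simp only [Real.cos_zero, Real.sin_zero, Real.sin_pi_div_two, Real.cos_pi_div_two, mul_zero,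
    mul_one, zero_add, sub_zero] at e1 e2 e3
  rw [← e3] at e2
  have : y θ = 0 := by
    linear_combination Real.cos θ * e1 + Real.sin θ * e2 - y θ * Real.sin_sq_add_cos_sq θ
  simp only [hy] at this
  linarith

lemma W_one_deriv {θ : ℝ} (hθ : θ ∈ Ioo 0 (π / 2)) :
    HasDerivAt (fun t => W 1 t) (Real.cos θ - Real.sin θ) θ := by
  refine (((Real.hasDerivAt_cos θ).add (Real.hasDerivAt_sin θ)).sub_const 1).congr_deriv
    (by ring) |>.congr_of_eventuallyEq ?_
  filter_upwards [isOpen_Ioo.mem_nhds hθ] with t ht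
  exact W_one ⟨ht.1.le, ht.2.le⟩

/-! ### Positivity consequences of the theta function bound -/

/-- `∑ (-1)ⁿ r^{mₙ²} sin(mₙ φ)` is a rescaled `θ₁`. -/
lemma heat_lower {r : ℝ} (h0 : 0 < r) (h1 : r < 1) : ∃ c > 0, ∀ φ, 0 ≤ Real.sin (2 * φ) →
    c * Real.sin (2 * φ) ≤ ∑' n : ℕ, (-1) ^ n * r ^ (mIdx n ^ 2) * Real.sin (mIdx n * φ) := by
  obtain ⟨c, hc, h⟩ := theta_lower (Q := r ^ 32) (by positivity)
    (pow_lt_one₀ h0.le h1 (by norm_num))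
  refine ⟨r ^ 4 * c, by positivity, fun φ hφ => ?_⟩
  have := mul_le_mul_of_nonneg_left (h (2 * φ) hφ) (by positivity : 0 ≤ r ^ 4)
  rw [← tsum_mul_left, ← mul_assoc] at this
  refine this.trans_eq (tsum_congr fun n => ?_)
  have e1 : mIdx n ^ 2 = 4 + 32 * triIdx n := by
    rw [show 32 * triIdx n = 16 * (2 * triIdx n) by ring, triIdx_two, mIdx]; ring
  have e2 : (2 * (n : ℝ) + 1) * (2 * φ) = mIdx n * φ := by rw [mIdx_cast]; ring
  rw [e1, e2, pow_add, pow_mul]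
  ring

lemma summable_mul_pow_sq {r : ℝ} (h0 : 0 < r) (h1 : r < 1) :
    Summable fun n => (mIdx n : ℝ) * r ^ (mIdx n ^ 2) := by
  refine Summable.of_nonneg_of_le (fun n => by positivity) (fun n => ?_)
    (gap_summable mIdx_sq_inj h0 h1)
  have hm : (1 : ℝ) ≤ mIdx n := by exact_mod_cast (show 1 ≤ mIdx n by simp [mIdx])
  refine mul_le_mul ?_ (pow_le_pow_of_le_one h0.le h1.le (Nat.sub_le _ _)) (by positivity)
    (by positivity)
  push_cast
  nlinarith

/-- `W_rr(r,π/4) > 0`: up to a factor this is the slope of `θ₁` at its zero. -/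
lemma Wrr_pos {r : ℝ} (h0 : 0 < r) (h1 : r < 1) :
    0 < (8 / π) * ∑' n : ℕ, (-1) ^ n * (mIdx n : ℝ) * r ^ (mIdx n ^ 2 - 2) := by
  obtain ⟨c, hc, hle⟩ := heat_lower h0 h1
  have hd : HasDerivAt
      (fun φ => ∑' n : ℕ, (-1) ^ n * r ^ (mIdx n ^ 2) * Real.sin (mIdx n * φ))
      (∑' n : ℕ, (-1) ^ n * r ^ (mIdx n ^ 2) * (mIdx n * Real.cos (mIdx n * 0))) 0 := by
    refine hasDerivAt_tsum (y₀ := 0)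
      (g := fun n φ => (-1) ^ n * r ^ (mIdx n ^ 2) * Real.sin (mIdx n * φ))
      (g' := fun n φ => (-1) ^ n * r ^ (mIdx n ^ 2) * (mIdx n * Real.cos (mIdx n * φ)))
      (summable_mul_pow_sq h0 h1) (fun n y => ?_) (fun n y => ?_) (by simp) 0
    · refine (((hasDerivAt_id y).const_mul (mIdx n : ℝ)).sin.const_mul _).congr_deriv ?_
      simp only [id]; ring
    · have hm := mIdx_pos n
      rw [Real.norm_eq_abs, abs_mul, abs_mul, abs_mul, abs_pow, abs_neg, abs_one, one_pow, one_mul,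
        abs_of_pos hm, abs_of_pos (pow_pos h0 _)]
      have := Real.abs_cos_le_one (mIdx n * y)
      calc _ ≤ r ^ (mIdx n ^ 2) * (mIdx n * 1) := by gcongr
        _ = _ := by ring
  have hsin : HasDerivAt (fun φ => c * Real.sin (2 * φ)) (c * 2) 0 := by
    refine ((((hasDerivAt_id (0 : ℝ)).const_mul 2).sin).const_mul c).congr_deriv ?_
    simp
  -- the difference is nonnegative on `[0, π/2]` and vanishes at `0`, so its slope there is `≥ 0`
  have h2 := (hd.sub hsin).hasDerivWithinAt (s := Ioi 0)
  rw [hasDerivWithinAt_iff_tendsto_slope' (by simp)] at h2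
  have h3 := ge_of_tendsto h2 (b := 0) ?_
  · have e : ∑' n : ℕ, (-1) ^ n * r ^ (mIdx n ^ 2) * (mIdx n * Real.cos (mIdx n * 0)) =
        r ^ 2 * ∑' n : ℕ, (-1) ^ n * (mIdx n : ℝ) * r ^ (mIdx n ^ 2 - 2) := by
      rw [← tsum_mul_left]
      refine tsum_congr fun n => ?_
      have : mIdx n ^ 2 = 2 + (mIdx n ^ 2 - 2) := by
        have : 2 ≤ mIdx n ^ 2 := by unfold mIdx; nlinarith [Nat.zero_le n, sq_nonneg n]
        omega
      nth_rw 1 [this]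
      rw [pow_add]; simp; ring
    rw [e] at h3
    have : 0 < ∑' n : ℕ, (-1) ^ n * (mIdx n : ℝ) * r ^ (mIdx n ^ 2 - 2) := by
      by_contra hneg
      nlinarith [sq_nonneg r]
    have hπ := Real.pi_pos
    positivity
  · filter_upwards [Ioo_mem_nhdsGT (show (0 : ℝ) < π / 2 by positivity)] with φ hφ
    have hs : 0 ≤ Real.sin (2 * φ) :=
      Real.sin_nonneg_of_nonneg_of_le_pi (by linarith [hφ.1]) (by linarith [hφ.2])
    have := hle φ hs
    rw [slope_def_field]
    simp only [Pi.sub_apply, mul_zero, Real.sin_zero, tsum_zero, sub_zero]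
    exact div_nonneg (by linarith) hφ.1.le

/-- `cos φ · W_θ + sin φ · r W_r ≤ 0`, up to the factor `8/π`, at `θ = π/4 + φ`, for
`φ ∈ [0, π/4]`. The left side vanishes at `φ = 0`, and its `φ`-derivative is `-sin φ` times a positive theta series. -/
lemma slope_ineq {r : ℝ} (h0 : 0 < r) (h1 : r < 1) {φ : ℝ} (hφ : φ ∈ Icc 0 (π / 4)) :
    ∑' n : ℕ, (-1) ^ n * r ^ (mIdx n ^ 2) / ((mIdx n : ℝ) ^ 2 - 1) *
      (mIdx n * Real.cos (mIdx n * φ) * Real.sin φ - Real.sin (mIdx n * φ) * Real.cos φ) ≤ 0 := by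
  obtain ⟨c, hc, hle⟩ := heat_lower h0 h1
  set K : ℝ → ℝ := fun φ => ∑' n : ℕ, (-1) ^ n * r ^ (mIdx n ^ 2) / ((mIdx n : ℝ) ^ 2 - 1) *
      (mIdx n * Real.cos (mIdx n * φ) * Real.sin φ - Real.sin (mIdx n * φ) * Real.cos φ) with hK
  have hd : ∀ φ, HasDerivAt K (∑' n : ℕ, -Real.sin φ *
      ((-1) ^ n * r ^ (mIdx n ^ 2) * Real.sin (mIdx n * φ))) φ := by
    intro φ
    refine hasDerivAt_tsum (y₀ := 0)
      (g := fun n φ => (-1) ^ n * r ^ (mIdx n ^ 2) / ((mIdx n : ℝ) ^ 2 - 1) *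
        (mIdx n * Real.cos (mIdx n * φ) * Real.sin φ - Real.sin (mIdx n * φ) * Real.cos φ))
      (g' := fun n φ => -Real.sin φ * ((-1) ^ n * r ^ (mIdx n ^ 2) * Real.sin (mIdx n * φ)))
      (summable_mul_pow_sq h0 h1) (fun n y => ?_) (fun n y => ?_) (by simp) φ
    · have hp := (mIdx_sq_sub_pos n).ne'
      have hl := (hasDerivAt_id y).const_mul (mIdx n : ℝ)
      refine (((((hl.cos).const_mul (mIdx n : ℝ)).mul (Real.hasDerivAt_sin y)).sub
        (hl.sin.mul (Real.hasDerivAt_cos y))).const_mul _).congr_deriv ?_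
      simp only [id]
      field_simp
      ring
    · have hm : (1 : ℝ) ≤ mIdx n := by exact_mod_cast (show 1 ≤ mIdx n by simp [mIdx])
      rw [Real.norm_eq_abs, abs_mul, abs_mul, abs_mul, abs_pow, abs_neg, abs_neg, abs_one, one_pow,
        one_mul, abs_of_pos (pow_pos h0 _)]
      have a1 := Real.abs_sin_le_one (mIdx n * y)
      have a2 := Real.abs_sin_le_one y
      have a3 : 0 < r ^ (mIdx n ^ 2) := by positivity
      calc _ ≤ 1 * (r ^ (mIdx n ^ 2) * 1) := by gcongr
        _ ≤ _ := by nlinarith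
  have hanti : AntitoneOn K (Icc 0 (π / 4)) := by
    refine antitoneOn_of_deriv_nonpos (convex_Icc _ _)
      (fun x _ => (hd x).continuousAt.continuousWithinAt)
      (fun x _ => (hd x).differentiableAt.differentiableWithinAt) fun x hx => ?_
    rw [interior_Icc] at hx
    have hπ := Real.pi_pos
    have s1 : 0 ≤ Real.sin x :=
      Real.sin_nonneg_of_nonneg_of_le_pi hx.1.le (by linarith [hx.2])
    have s2 : 0 ≤ Real.sin (2 * x) :=
      Real.sin_nonneg_of_nonneg_of_le_pi (by linarith [hx.1]) (by linarith [hx.2])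
    have := hle x s2
    rw [(hd x).deriv, tsum_mul_left]
    nlinarith [mul_nonneg hc.le s2]
  have h := hanti ⟨le_rfl, by positivity⟩ hφ hφ.1
  have k0 : K 0 = 0 := by simp [hK]
  rw [k0] at h
  exact h

/-! ### The diagonal slope `W_r(·,π/4)` as a bijection onto `(0,√2)` -/

lemma tendsto_alt_mIdx :
    Tendsto (fun k => ∑ i ∈ Finset.range k, (-1 : ℝ) ^ i * (1 / (mIdx i : ℝ))) atTop
      (𝓝 (π / 8)) := by
  have h := Real.tendsto_sum_pi_div_four.const_mul (1 / 2 : ℝ)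
  rw [show 1 / 2 * (π / 4) = π / 8 by ring] at h
  refine h.congr fun k => ?_
  rw [Finset.mul_sum]
  refine Finset.sum_congr rfl fun i _ => ?_
  rw [mIdx_cast, show (4 * i + 2 : ℝ) = 2 * (2 * i + 1) by ring]
  have : (2 * i + 1 : ℝ) ≠ 0 := by positivity
  field_simp

lemma summable_pow_div {r : ℝ} (h0 : 0 < r) (h1 : r < 1) :
    Summable fun n : ℕ => (-1 : ℝ) ^ n * (r ^ (mIdx n ^ 2) / mIdx n) := by
  refine Summable.of_norm_bounded (summable_mul_pow_sq h0 h1) fun n => ?_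
  have hm : (1 : ℝ) ≤ mIdx n := by exact_mod_cast (show 1 ≤ mIdx n by simp [mIdx])
  rw [norm_mul, norm_pow, norm_neg, norm_one, one_pow, one_mul,
    Real.norm_of_nonneg (by positivity)]
  have hp : 0 < r ^ (mIdx n ^ 2) := by positivity
  rw [div_le_iff₀ (by linarith)]
  nlinarith [mul_pos hp (show (0 : ℝ) < mIdx n by linarith)]

/-- Abel summation of the Leibniz series with lacunary exponents: the even and odd partial sums
enclose the alternating series for every `r < 1`. -/
lemma tendsto_heat_one :
    Tendsto (fun r : ℝ => ∑' n : ℕ, (-1 : ℝ) ^ n * (r ^ (mIdx n ^ 2) / mIdx n)) (𝓝[<] 1)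
      (𝓝 (π / 8)) := by
  have hanti : ∀ r : ℝ, 0 < r → r < 1 → Antitone fun n => r ^ (mIdx n ^ 2) / (mIdx n : ℝ) := by
    intro r h0 h1 a b hab
    have hm : mIdx a ≤ mIdx b := by simp only [mIdx]; omega
    have hma := mIdx_pos a
    have hc : (mIdx a : ℝ) ≤ mIdx b := by exact_mod_cast hm
    exact div_le_div₀ (by positivity)
      (pow_le_pow_of_le_one h0.le h1.le (Nat.pow_le_pow_left hm 2)) hma hc
  have hev : ∀ᶠ r : ℝ in 𝓝[<] 1, 0 < r ∧ r < 1 := Ioo_mem_nhdsLT one_pos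
  have hpart : ∀ k, Tendsto
      (fun r : ℝ => ∑ i ∈ Finset.range k, (-1 : ℝ) ^ i * (r ^ (mIdx i ^ 2) / mIdx i)) (𝓝[<] 1)
      (𝓝 (∑ i ∈ Finset.range k, (-1 : ℝ) ^ i * (1 / (mIdx i : ℝ)))) := by
    intro k
    have hc : Continuous
      (fun r : ℝ => ∑ i ∈ Finset.range k, (-1 : ℝ) ^ i * (r ^ (mIdx i ^ 2) / mIdx i)) := by
      fun_prop
    have := hc.tendsto 1
    simp only [one_pow] at this
    exact this.mono_left nhdsWithin_le_nhds
  rw [tendsto_order]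
  constructor
  · intro a ha
    have h2 := tendsto_alt_mIdx.comp (tendsto_atTop_mono (f := id) (g := fun k : ℕ => 2 * k)
      (fun k => by simp only [id]; omega) tendsto_id)
    obtain ⟨k, hk⟩ := ((tendsto_order.1 h2).1 a ha).exists
    filter_upwards [(tendsto_order.1 (hpart (2 * k))).1 a hk, hev] with r hr h01
    exact hr.trans_le (Antitone.alternating_series_le_tendsto
      (summable_pow_div h01.1 h01.2).hasSum.tendsto_sum_nat (hanti r h01.1 h01.2) k)
  · intro a ha
    have h2 := tendsto_alt_mIdx.comp (tendsto_atTop_mono (f := id) (g := fun k : ℕ => 2 * k + 1)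
      (fun k => by simp only [id]; omega) tendsto_id)
    obtain ⟨k, hk⟩ := ((tendsto_order.1 h2).2 a ha).exists
    filter_upwards [(tendsto_order.1 (hpart (2 * k + 1))).2 a hk, hev] with r hr h01
    exact (Antitone.tendsto_le_alternating_series
      (summable_pow_div h01.1 h01.2).hasSum.tendsto_sum_nat (hanti r h01.1 h01.2) k).trans_lt hr

/-- Termwise, `m/(m² - 1) = 1/((m² - 1) m) + 1/m`. -/
lemma Wr4_mul {r : ℝ} (h0 : 0 < r) (h1 : r < 1) : r * Wr4 r = W r (π / 4) +
    (8 / π) * ∑' n : ℕ, (-1 : ℝ) ^ n * (r ^ (mIdx n ^ 2) / mIdx n) := by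
  have hs : Summable fun n : ℕ => r ^ (mIdx n ^ 2) * Real.sin (mIdx n * (π / 4)) /
      (((mIdx n : ℝ) ^ 2 - 1) * mIdx n) := by
    refine Summable.of_norm_bounded summable_inv_sq_sub fun n => ?_
    have h := mIdx_sq_sub_pos n
    have h' := mIdx_pos n
    rw [Real.norm_eq_abs, abs_div, abs_mul, abs_of_pos (mul_pos h h'), abs_of_pos (pow_pos h0 _)]
    refine le_trans ?_ (inv_sq_sub_mul_le n)
    gcongr
    exact mul_le_one₀ (pow_le_one₀ h0.le h1.le) (abs_nonneg _) (Real.abs_sin_le_one _)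
  rw [Wr4_eq (abs_lt.2 ⟨by linarith, h1⟩), W, ← mul_add, ← hs.tsum_add (summable_pow_div h0 h1),
    mul_left_comm, ← tsum_mul_left]
  congr 1
  refine tsum_congr fun n => ?_
  have := (mIdx_pos n).ne'
  have := (mIdx_sq_sub_pos n).ne'
  have e : r ^ (mIdx n ^ 2) = r * r ^ (mIdx n ^ 2 - 1) := by
    rw [← pow_succ', Nat.sub_add_cancel (one_le_mIdx_sq n)]
  rw [(mIdx_trig n).1, e]
  field_simp
  ring

lemma Wr4_tendsto_one : Tendsto Wr4 (𝓝[<] 1) (𝓝 (Real.sqrt 2)) := by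
  have hπ := Real.pi_pos
  have hW : Tendsto (fun r => W r (π / 4)) (𝓝[<] 1) (𝓝 (Real.sqrt 2 - 1)) := by
    have h1 : W 1 (π / 4) = Real.sqrt 2 - 1 := by
      rw [W_one ⟨by positivity, by linarith⟩, Real.cos_pi_div_four, Real.sin_pi_div_four]; ring
    rw [← h1]
    exact (W4_continuousOn 1 ⟨zero_le_one, le_rfl⟩).mono_left
      (nhdsWithin_le_of_mem (mem_of_superset (Ioo_mem_nhdsLT (zero_lt_one (α := ℝ)))
        Ioo_subset_Icc_self))
  have hid : Tendsto (fun r : ℝ => r⁻¹) (𝓝[<] 1) (𝓝 (1 : ℝ)⁻¹) :=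
    (continuousAt_inv₀ one_ne_zero).tendsto.mono_left nhdsWithin_le_nhds
  have h := hid.mul (hW.add (tendsto_heat_one.const_mul (8 / π)))
  have e : (1 : ℝ)⁻¹ * (Real.sqrt 2 - 1 + 8 / π * (π / 8)) = Real.sqrt 2 := by
    field_simp; ring
  rw [e] at h
  refine h.congr' ?_
  filter_upwards [Ioo_mem_nhdsLT (zero_lt_one (α := ℝ))] with r hr
  rw [← Wr4_mul hr.1 hr.2, ← mul_assoc, inv_mul_cancel₀ hr.1.ne', one_mul]

lemma Wr4_tendsto_zero : Tendsto Wr4 (𝓝[>] 0) (𝓝 0) := by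
  have h0 : Wr4 0 = 0 := by
    rw [Wr4_eq (by simp)]
    have : ∀ n, mIdx n ^ 2 - 1 ≠ 0 := fun n => by
      have : 2 ≤ mIdx n ^ 2 := by unfold mIdx; nlinarith [Nat.zero_le n, sq_nonneg n]
      omega
    simp [this]
  have h := (Wr4_hasDerivAt (r := 0) (by simp)).continuousAt.tendsto
  rw [h0] at h
  exact h.mono_left nhdsWithin_le_nhds

lemma abs_lt_one_of_mem {r : ℝ} (hr : r ∈ Ioo (0 : ℝ) 1) : |r| < 1 := by
  rw [abs_of_pos hr.1]; exact hr.2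

lemma Wr4_deriv_pos {r : ℝ} (hr : r ∈ Ioo (0 : ℝ) 1) : 0 < deriv Wr4 r := by
  rw [(Wr4_hasDerivAt (abs_lt_one_of_mem hr)).deriv]
  exact Wrr_pos hr.1 hr.2

lemma Wr4_continuousOn : ContinuousOn Wr4 (Ioo 0 1) := fun _ hr =>
  (Wr4_hasDerivAt (abs_lt_one_of_mem hr)).continuousAt.continuousWithinAt

lemma Wr4_strictMonoOn : StrictMonoOn Wr4 (Ioo 0 1) :=
  strictMonoOn_of_deriv_pos (convex_Ioo 0 1) Wr4_continuousOn fun r hr => by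
    rw [interior_Ioo] at hr
    exact Wr4_deriv_pos hr

lemma Wr4_mapsTo : MapsTo Wr4 (Ioo 0 1) (Ioo 0 (Real.sqrt 2)) := by
  intro x hx
  have hx2 : x / 2 ∈ Ioo (0 : ℝ) 1 := ⟨by linarith [hx.1], by linarith [hx.2]⟩
  have hx3 : (x + 1) / 2 ∈ Ioo (0 : ℝ) 1 := ⟨by linarith [hx.1], by linarith [hx.2]⟩
  constructor
  · refine lt_of_le_of_lt (le_of_tendsto Wr4_tendsto_zero ?_)
      (Wr4_strictMonoOn hx2 hx (by linarith [hx.1]))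
    filter_upwards [Ioo_mem_nhdsGT hx2.1] with z hz
    exact (Wr4_strictMonoOn ⟨hz.1, hz.2.trans hx2.2⟩ hx2 hz.2).le
  · refine lt_of_lt_of_le (Wr4_strictMonoOn hx hx3 (by linarith [hx.2]))
      (ge_of_tendsto Wr4_tendsto_one ?_)
    filter_upwards [Ioo_mem_nhdsLT hx3.2] with z hz
    exact (Wr4_strictMonoOn hx3 ⟨hx3.1.trans hz.1, hz.2⟩ hz.1).le

lemma Wr4_bijOn : BijOn Wr4 (Ioo 0 1) (Ioo 0 (Real.sqrt 2)) := by
  refine ⟨Wr4_mapsTo, Wr4_strictMonoOn.injOn, fun s hs => ?_⟩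
  obtain ⟨a, ha, ha'⟩ := (((tendsto_order.1 Wr4_tendsto_zero).2 s hs.1).and
    (Ioo_mem_nhdsGT (zero_lt_one (α := ℝ)))).exists
  obtain ⟨b, hb, hb'⟩ := (((tendsto_order.1 Wr4_tendsto_one).1 s hs.2).and
    (Ioo_mem_nhdsLT (zero_lt_one (α := ℝ)))).exists
  exact isPreconnected_Ioo.intermediate_value ha' hb' Wr4_continuousOn ⟨ha.le, hb.le⟩

/-! ### The minimax value on the diagonal -/

/-- The radial maximum `max_r ( r s cos φ - W(r, π/4 + φ) )`, with the angle measured from the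
diagonal. -/
noncomputable def radMax (s φ : ℝ) : ℝ :=
  ⨆ r : Icc (0 : ℝ) 1, ((r : ℝ) * (s * Real.cos φ) - W r (π / 4 + φ))

lemma payoff_continuous (s : ℝ) : Continuous fun p : ℝ × Icc (0 : ℝ) 1 =>
    (p.2 : ℝ) * (s * Real.cos p.1) - W p.2 (π / 4 + p.1) := by
  have h := W_continuous.comp
    (by fun_prop : Continuous fun p : ℝ × Icc (0 : ℝ) 1 => (π / 4 + p.1, p.2))
  exact (by fun_prop : Continuous fun p : ℝ × Icc (0 : ℝ) 1 =>
    (p.2 : ℝ) * (s * Real.cos p.1)).sub h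

lemma radMax_continuous (s : ℝ) : Continuous (radMax s) := by
  have h := IsCompact.continuous_sSup (K := (univ : Set (Icc (0 : ℝ) 1))) isCompact_univ
    (f := fun (φ : ℝ) (r : Icc (0 : ℝ) 1) => (r : ℝ) * (s * Real.cos φ) - W r (π / 4 + φ))
    (payoff_continuous s)
  simp only [image_univ, sSup_range] at h
  exact h

lemma radMax_attained (s φ : ℝ) : ∃ r ∈ Icc (0 : ℝ) 1,
    radMax s φ = r * (s * Real.cos φ) - W r (π / 4 + φ) ∧
    ∀ r' ∈ Icc (0 : ℝ) 1, ∀ φ', r' * (s * Real.cos φ') - W r' (π / 4 + φ') ≤ radMax s φ' := by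
  have hc : ∀ φ, Continuous fun r : Icc (0 : ℝ) 1 =>
      (r : ℝ) * (s * Real.cos φ) - W r (π / 4 + φ) := fun φ =>
    (payoff_continuous s).comp (by fun_prop : Continuous fun r : Icc (0 : ℝ) 1 => (φ, r))
  obtain ⟨r, -, hr⟩ := isCompact_univ.exists_isMaxOn univ_nonempty (hc φ).continuousOn
  refine ⟨r, r.2, le_antisymm (ciSup_le fun r' => hr (mem_univ r')) ?_, fun r' hr' φ' => ?_⟩
  · exact le_ciSup (f := fun r : Icc (0 : ℝ) 1 => (r : ℝ) * (s * Real.cos φ) - W r (π / 4 + φ))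
      (isCompact_range (hc φ)).bddAbove r
  · exact le_ciSup (f := fun r : Icc (0 : ℝ) 1 => (r : ℝ) * (s * Real.cos φ') - W r (π / 4 + φ'))
      (isCompact_range (hc φ')).bddAbove ⟨r', hr'⟩

lemma radMax_neg (s φ : ℝ) : radMax s (-φ) = radMax s φ := by
  simp only [radMax, Real.cos_neg, ← sub_eq_add_neg, W_symm]

/-- `slope_ineq` with `W_θ` and `r W_r` at angle `π/4 + φ` written as separate series. -/
lemma slope_ineq' {r : ℝ} (h0 : 0 < r) (h1 : r < 1) {φ : ℝ} (hφ : φ ∈ Icc 0 (π / 4)) :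
    Real.cos φ * ((8 / π) * ∑' n : ℕ, r ^ (mIdx n ^ 2) * Real.cos (mIdx n * (π / 4 + φ)) /
        ((mIdx n : ℝ) ^ 2 - 1)) +
      Real.sin φ * (r * ((8 / π) * ∑' n : ℕ, (Real.sin (mIdx n * (π / 4 + φ)) *
        ((mIdx n : ℝ) / ((mIdx n : ℝ) ^ 2 - 1))) * r ^ (mIdx n ^ 2 - 1))) ≤ 0 := by
  have hπ := Real.pi_pos
  have hk := slope_ineq h0 h1 hφ
  have hb : ∀ n, r ^ (mIdx n ^ 2) ≤ 1 := fun n => pow_le_one₀ h0.le h1.le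
  have sB : Summable fun n : ℕ => r ^ (mIdx n ^ 2) * Real.cos (mIdx n * (π / 4 + φ)) /
        ((mIdx n : ℝ) ^ 2 - 1) := by
    refine Summable.of_norm_bounded summable_inv_sq_sub fun n => ?_
    have h := mIdx_sq_sub_pos n
    rw [Real.norm_eq_abs, abs_div, abs_mul, abs_of_pos h, abs_of_pos (pow_pos h0 _)]
    gcongr
    exact mul_le_one₀ (hb n) (abs_nonneg _) (Real.abs_cos_le_one _)
  have sA : Summable fun n : ℕ => r * ((Real.sin (mIdx n * (π / 4 + φ)) *
        ((mIdx n : ℝ) / ((mIdx n : ℝ) ^ 2 - 1))) * r ^ (mIdx n ^ 2 - 1)) := by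
    refine Summable.mul_left r (Summable.of_norm_bounded
      ((summable_geometric_of_lt_one h0.le h1).comp_injective mIdx_sq_sub_inj) fun n => ?_)
    have h := mIdx_sq_sub_pos n
    have h' := mIdx_pos n
    rw [norm_mul, Real.norm_of_nonneg (pow_pos h0 _).le, norm_mul,
      Real.norm_of_nonneg (div_pos h' h).le]
    have : ‖Real.sin (mIdx n * (π / 4 + φ))‖ * ((mIdx n : ℝ) / ((mIdx n : ℝ) ^ 2 - 1)) ≤ 1 :=
      mul_le_one₀ (Real.abs_sin_le_one _) (div_pos h' h).le (mIdx_div_le_one n)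
    calc _ ≤ 1 * r ^ (mIdx n ^ 2 - 1) := by gcongr
      _ = _ := one_mul _
  have key : Real.cos φ * (∑' n : ℕ, r ^ (mIdx n ^ 2) * Real.cos (mIdx n * (π / 4 + φ)) /
        ((mIdx n : ℝ) ^ 2 - 1)) +
      Real.sin φ * (r * ∑' n : ℕ, (Real.sin (mIdx n * (π / 4 + φ)) *
        ((mIdx n : ℝ) / ((mIdx n : ℝ) ^ 2 - 1))) * r ^ (mIdx n ^ 2 - 1)) ≤ 0 := by
    refine le_of_eq_of_le ?_ hk
    rw [← tsum_mul_left (a := r), ← tsum_mul_left, ← tsum_mul_left,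
      ← (sB.mul_left _).tsum_add (sA.mul_left _)]
    refine tsum_congr fun n => ?_
    have e : r ^ (mIdx n ^ 2) = r * r ^ (mIdx n ^ 2 - 1) := by
      rw [← pow_succ', Nat.sub_add_cancel (one_le_mIdx_sq n)]
    rw [e, sin_mIdx_shift, cos_mIdx_shift]
    ring
  have := mul_le_mul_of_nonneg_left key (by positivity : 0 ≤ 8 / π)
  rw [mul_zero] at this
  refine le_of_eq_of_le ?_ this
  ring

/-- Envelope inequality: at a radial maximizer `r`, the payoff with `r` frozen is nondecreasing
in the angle. For `r < 1` the critical point equation turns this into `slope_ineq'`; for `r = 1`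
the derivative is `(√2 - s) sin φ`. -/
lemma frozen_deriv {s : ℝ} (hs : s ∈ Ioo 0 (Real.sqrt 2)) {φ : ℝ} (hφ : φ ∈ Ico 0 (π / 4)) {r : ℝ}
    (hr : r ∈ Icc (0 : ℝ) 1)
    (hmax : ∀ r' ∈ Icc (0 : ℝ) 1, r' * (s * Real.cos φ) - W r' (π / 4 + φ) ≤
      r * (s * Real.cos φ) - W r (π / 4 + φ)) :
    ∃ d, 0 ≤ d ∧ HasDerivAt (fun ψ => r * (s * Real.cos ψ) - W r (π / 4 + ψ)) d φ := by
  have hπ := Real.pi_pos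
  have hsin : 0 ≤ Real.sin φ :=
    Real.sin_nonneg_of_nonneg_of_le_pi hφ.1 (by linarith [hφ.2])
  have hcos : 0 < Real.cos φ :=
    Real.cos_pos_of_mem_Ioo ⟨by linarith [hφ.1], by linarith [hφ.2]⟩
  have build : ∀ w, HasDerivAt (fun t => W r t) w (π / 4 + φ) →
      HasDerivAt (fun ψ => r * (s * Real.cos ψ) - W r (π / 4 + ψ))
        (-(r * s * Real.sin φ) - w) φ := by
    intro w hw
    have h1 := (((Real.hasDerivAt_cos φ).const_mul s).const_mul r).sub
      (hw.comp_const_add (π / 4) φ)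
    refine h1.congr_deriv ?_
    ring
  rcases hr.1.eq_or_lt with h0 | h0
  · subst h0
    refine ⟨0, le_rfl, ?_⟩
    simp only [W_zero, zero_mul, sub_zero]
    exact hasDerivAt_const _ _
  rcases hr.2.eq_or_lt with h1 | h1
  · subst h1
    refine ⟨_, ?_, build _ (W_one_deriv ⟨by linarith [hφ.1], by linarith [hφ.2]⟩)⟩
    rw [Real.cos_add, Real.sin_add, Real.cos_pi_div_four, Real.sin_pi_div_four]
    nlinarith [mul_nonneg hsin (sub_nonneg.2 hs.2.le)]
  · have hWr := W_hasDerivAt_r (π / 4 + φ) (r := r) (by rwa [abs_of_pos h0])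
    have hcrit := IsLocalMax.hasDerivAt_eq_zero
      (f := fun x => x * (s * Real.cos φ) - W x (π / 4 + φ)) (a := r)
      (by
        filter_upwards [isOpen_Ioo.mem_nhds (show r ∈ Ioo (0 : ℝ) 1 from ⟨h0, h1⟩)] with x hx
        exact hmax x ⟨hx.1.le, hx.2.le⟩)
      (((hasDerivAt_id r).mul_const (s * Real.cos φ)).sub hWr)
    have hine := slope_ineq' h0 h1 ⟨hφ.1, hφ.2.le⟩
    refine ⟨_, ?_, build _ (W_hasDerivAt_θ h0.le h1.le _)⟩
    rw [one_mul, sub_eq_zero] at hcrit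
    rw [← hcrit] at hine
    set w := (8 / π) * ∑' n : ℕ, r ^ (mIdx n ^ 2) * Real.cos (mIdx n * (π / 4 + φ)) /
        ((mIdx n : ℝ) ^ 2 - 1)
    by_contra hneg
    have := mul_neg_of_pos_of_neg hcos (not_le.1 hneg)
    nlinarith

/-- The radial maximum is minimal on the diagonal: its lower right Dini derivative is nonnegative
on `[0, π/4)`. -/
lemma radMax_zero_le {s : ℝ} (hs : s ∈ Ioo 0 (Real.sqrt 2)) {φ : ℝ} (hφ : φ ∈ Icc 0 (π / 4)) :
    radMax s 0 ≤ radMax s φ := by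
  have h := image_le_of_liminf_slope_right_le_deriv_boundary (f := fun φ => -radMax s φ)
    (a := 0) (b := π / 4) (B := fun _ => -radMax s 0) (B' := fun _ => 0)
    (radMax_continuous s).neg.continuousOn le_rfl continuousOn_const
    (fun x _ => hasDerivWithinAt_const _ _ _) ?_ hφ
  · simpa using h
  intro x hx ε hε
  obtain ⟨r, hr, hreq, hle⟩ := radMax_attained s x
  obtain ⟨d, hd, hder⟩ := frozen_deriv hs hx hr fun r' hr' => hreq ▸ hle r' hr' x
  have ht := (hasDerivWithinAt_iff_tendsto_slope' (by simp)).1 (hder.hasDerivWithinAt (s := Ioi x))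
  have hev := (tendsto_order.1 ht).1 (-ε) (by linarith)
  refine Eventually.frequently ?_
  filter_upwards [hev, self_mem_nhdsWithin] with z hz hzx
  have hzx' : 0 < z - x := sub_pos.2 hzx
  rw [slope_def_field, lt_div_iff₀ hzx'] at hz
  rw [slope_def_field, div_lt_iff₀ hzx']
  have := hle r hr z
  linarith

lemma diag_arg (s θ : ℝ) : s / Real.sqrt 2 * Real.cos θ + s / Real.sqrt 2 * Real.sin θ =
    s * Real.cos (θ - π / 4) := by
  rw [Real.cos_sub, Real.cos_pi_div_four, Real.sin_pi_div_four]
  have h : Real.sqrt 2 * Real.sqrt 2 = 2 := Real.mul_self_sqrt (by norm_num)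
  have h0 : Real.sqrt 2 ≠ 0 := by positivity
  field_simp
  linear_combination -s * (Real.cos θ + Real.sin θ) * h

lemma φdiag_eq_radMax {s : ℝ} (hs : s ∈ Ioo 0 (Real.sqrt 2)) : φdiag s = radMax s 0 := by
  have hπ := Real.pi_pos
  have e : φdiag s = ⨅ θ : Icc (0 : ℝ) (π / 2), radMax s ((θ : ℝ) - π / 4) := by
    simp only [φdiag, u, radMax, diag_arg, add_sub_cancel]
  have hle : ∀ θ : Icc (0 : ℝ) (π / 2), radMax s 0 ≤ radMax s ((θ : ℝ) - π / 4) := by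
    intro θ
    rcases le_total (π / 4) (θ : ℝ) with h | h
    · exact radMax_zero_le hs ⟨by linarith, by linarith [θ.2.2]⟩
    · rw [← radMax_neg s ((θ : ℝ) - π / 4)]
      have h0 : (0 : ℝ) ≤ θ := θ.2.1
      exact radMax_zero_le hs ⟨by linarith, by linarith⟩
  have : Nonempty (Icc (0 : ℝ) (π / 2)) := ⟨⟨0, le_rfl, by positivity⟩⟩
  rw [e]
  refine le_antisymm ?_ (le_ciInf hle)
  have := ciInf_le (f := fun θ : Icc (0 : ℝ) (π / 2) => radMax s ((θ : ℝ) - π / 4))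
    ⟨radMax s 0, by rintro _ ⟨θ, rfl⟩; exact hle θ⟩ ⟨π / 4, by positivity, by linarith⟩
  simpa using this

/-- On the diagonal the radial maximum is the Legendre transform of the convex function
`W(·,π/4)`, attained where `W_r = s`. -/
lemma φdiag_eq {r : ℝ} (hr : r ∈ Ioo (0 : ℝ) 1) :
    φdiag (Wr4 r) = Wr4 r * r - W r (π / 4) := by
  have hs := Wr4_mapsTo hr
  rw [φdiag_eq_radMax hs]
  obtain ⟨r', hr', heq, hle⟩ := radMax_attained (Wr4 r) 0
  simp only [Real.cos_zero, mul_one, add_zero] at heq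
  have hge := hle r ⟨hr.1.le, hr.2.le⟩ 0
  simp only [Real.cos_zero, mul_one, add_zero] at hge
  refine le_antisymm ?_ (by linarith)
  rw [heq]
  set f := fun x => x * Wr4 r - W x (π / 4) with hf
  have hcont : ContinuousOn f (Icc 0 1) :=
    (continuousOn_id.mul continuousOn_const).sub W4_continuousOn
  have hder : ∀ x ∈ Ioo (0 : ℝ) 1, HasDerivAt f (Wr4 r - Wr4 x) x := fun x hx => by
    exact (((hasDerivAt_id x).mul_const (Wr4 r)).sub
      (W4_hasDerivAt (abs_lt_one_of_mem hx))).congr_deriv (by ring)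
  suffices f r' ≤ f r by simp only [hf] at this; linarith
  rcases le_total r' r with h | h
  · refine monotoneOn_of_deriv_nonneg (convex_Icc 0 r) (hcont.mono
      (Icc_subset_Icc_right hr.2.le)) ?_ ?_ ⟨hr'.1, h⟩ ⟨hr.1.le, le_rfl⟩ h
    · rw [interior_Icc]
      exact fun x hx => (hder x ⟨hx.1, hx.2.trans hr.2⟩).differentiableAt.differentiableWithinAt
    · rw [interior_Icc]
      intro x hx
      have hx' : x ∈ Ioo (0 : ℝ) 1 := ⟨hx.1, hx.2.trans hr.2⟩
      rw [(hder x hx').deriv]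
      exact sub_nonneg.2 (Wr4_strictMonoOn hx' hr hx.2).le
  · refine antitoneOn_of_deriv_nonpos (convex_Icc r 1) (hcont.mono
      (Icc_subset_Icc_left hr.1.le)) ?_ ?_ ⟨le_rfl, hr.2.le⟩ ⟨h, hr'.2⟩ h
    · rw [interior_Icc]
      exact fun x hx => (hder x ⟨hr.1.trans hx.1, hx.2⟩).differentiableAt.differentiableWithinAt
    · rw [interior_Icc]
      intro x hx
      have hx' : x ∈ Ioo (0 : ℝ) 1 := ⟨hr.1.trans hx.1, hx.2⟩
      rw [(hder x hx').deriv]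
      exact sub_nonpos.2 (Wr4_strictMonoOn hr hx' hx.1).le

/-! ### The Legendre transform along the diagonal -/

/-- `r ↦ W_r(r,π/4)` equals the alternating series
`(8/π) ∑ (−1)^{n−1} (mₙ/(mₙ²−1)) r^{mₙ²−1}` and is a strictly increasing real-analytic
bijection of `(0,1)` onto `(0,√2)`; if `g` is its inverse then `u(s/√2, s/√2) = s g(s) −
W(g(s),π/4)`, and `φ(s) = u(s/√2,s/√2)` is real-analytic with `φ′ = g > 0`,
`φ″ = 1/W_{rr}(g(s),π/4) > 0`, hence strictly increasing and strictly convex. -/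
theorem stmt14 :
    (∀ r ∈ Ioo (0 : ℝ) 1,
      Wr4 r = (8 / π) * ∑' n : ℕ,
        (-1) ^ n * ((mIdx n : ℝ) / ((mIdx n : ℝ) ^ 2 - 1)) * r ^ (mIdx n ^ 2 - 1)) ∧
    StrictMonoOn Wr4 (Ioo (0 : ℝ) 1) ∧
    AnalyticOnNhd ℝ Wr4 (Ioo (0 : ℝ) 1) ∧
    Set.BijOn Wr4 (Ioo (0 : ℝ) 1) (Ioo (0 : ℝ) (Real.sqrt 2)) ∧
    (∀ g : ℝ → ℝ, Set.InvOn g Wr4 (Ioo (0 : ℝ) 1) (Ioo (0 : ℝ) (Real.sqrt 2)) →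
      (∀ s ∈ Ioo (0 : ℝ) (Real.sqrt 2), φdiag s = s * g s - W (g s) (π / 4)) ∧
      AnalyticOnNhd ℝ φdiag (Ioo (0 : ℝ) (Real.sqrt 2)) ∧
      (∀ s ∈ Ioo (0 : ℝ) (Real.sqrt 2), deriv φdiag s = g s ∧ 0 < g s) ∧
      (∀ s ∈ Ioo (0 : ℝ) (Real.sqrt 2),
        deriv (deriv φdiag) s = 1 / iteratedDeriv 2 (fun ρ => W ρ (π / 4)) (g s) ∧
        0 < deriv (deriv φdiag) s) ∧
      StrictMonoOn φdiag (Ioo (0 : ℝ) (Real.sqrt 2)) ∧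
      StrictConvexOn ℝ (Ioo (0 : ℝ) (Real.sqrt 2)) φdiag) := by
  refine ⟨fun r hr => Wr4_eq (abs_lt_one_of_mem hr), Wr4_strictMonoOn,
    Wr4_analytic.mono (Ioo_subset_Ioo_left (by norm_num)), Wr4_bijOn, fun g hg => ?_⟩
  have hgW : ∀ r ∈ Ioo (0 : ℝ) 1, g (Wr4 r) = r := fun r hr => hg.1 hr
  have hWan : ∀ r ∈ Ioo (0 : ℝ) 1, AnalyticAt ℝ Wr4 r := fun r hr =>
    Wr4_analytic r ⟨by linarith [hr.1], hr.2⟩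
  have hne : ∀ r ∈ Ioo (0 : ℝ) 1, deriv Wr4 r ≠ 0 := fun r hr => (Wr4_deriv_pos hr).ne'
  have hlocal : ∀ r ∈ Ioo (0 : ℝ) 1, ∀ᶠ x in 𝓝 r, x ∈ Ioo (0 : ℝ) 1 := fun r hr =>
    isOpen_Ioo.mem_nhds hr
  have hval : ∀ s ∈ Ioo (0 : ℝ) (Real.sqrt 2), φdiag s = s * g s - W (g s) (π / 4) := by
    intro s hs
    obtain ⟨r, hr, rfl⟩ := Wr4_bijOn.surjOn hs
    rw [hgW r hr, φdiag_eq hr]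
  have han : AnalyticOnNhd ℝ φdiag (Ioo (0 : ℝ) (Real.sqrt 2)) := by
    intro s hs
    obtain ⟨r, hr, rfl⟩ := Wr4_bijOn.surjOn hs
    rw [← analyticAt_comp_iff_of_deriv_ne_zero (hWan r hr) (hne r hr)]
    have hW : AnalyticAt ℝ (fun x => W x (π / 4)) r := W4_analytic r ⟨by linarith [hr.1], hr.2⟩
    refine (((hWan r hr).mul analyticAt_id).sub hW).congr ?_
    filter_upwards [hlocal r hr] with x hx
    exact (φdiag_eq hx).symm
  have hgder : ∀ r ∈ Ioo (0 : ℝ) 1, HasDerivAt g (deriv Wr4 r)⁻¹ (Wr4 r) := fun r hr =>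
    ((hWan r hr).hasStrictDerivAt.to_local_left_inverse (hne r hr)
      ((hlocal r hr).mono hgW)).hasDerivAt
  have hd1 : ∀ s ∈ Ioo (0 : ℝ) (Real.sqrt 2), deriv φdiag s = g s := by
    intro s hs
    have heq : φdiag =ᶠ[𝓝 s] fun t => t * g t - W (g t) (π / 4) :=
      Filter.mem_of_superset (isOpen_Ioo.mem_nhds hs) hval
    rw [heq.deriv_eq]
    obtain ⟨r, hr, rfl⟩ := Wr4_bijOn.surjOn hs
    have hW := W4_hasDerivAt (abs_lt_one_of_mem hr)
    rw [← hgW r hr] at hW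
    -- the two terms containing `g'` cancel since `Wr4 (g s) = s`
    have h := ((hasDerivAt_id (Wr4 r)).mul (hgder r hr)).sub
      (hW.comp (Wr4 r) (hgder r hr))
    refine h.deriv.trans ?_
    simp only [id, hgW r hr]
    ring
  have hd2 : ∀ r ∈ Ioo (0 : ℝ) 1, deriv (deriv φdiag) (Wr4 r) = (deriv Wr4 r)⁻¹ := by
    intro r hr
    have heq : deriv φdiag =ᶠ[𝓝 (Wr4 r)] g :=
      Filter.mem_of_superset (isOpen_Ioo.mem_nhds (Wr4_mapsTo hr)) hd1
    rw [heq.deriv_eq, (hgder r hr).deriv]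
  have hgpos : ∀ s ∈ Ioo (0 : ℝ) (Real.sqrt 2), 0 < g s := by
    intro s hs
    obtain ⟨r, hr, rfl⟩ := Wr4_bijOn.surjOn hs
    rw [hgW r hr]
    exact hr.1
  have hd2pos : ∀ s ∈ Ioo (0 : ℝ) (Real.sqrt 2), 0 < deriv (deriv φdiag) s := by
    intro s hs
    obtain ⟨r, hr, rfl⟩ := Wr4_bijOn.surjOn hs
    rw [hd2 r hr]
    exact inv_pos.2 (Wr4_deriv_pos hr)
  refine ⟨hval, han, fun s hs => ⟨hd1 s hs, hgpos s hs⟩, fun s hs => ⟨?_, hd2pos s hs⟩, ?_, ?_⟩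
  · obtain ⟨r, hr, rfl⟩ := Wr4_bijOn.surjOn hs
    rw [hd2 r hr, hgW r hr, iteratedDeriv_succ, iteratedDeriv_one, one_div]
    rfl
  · refine strictMonoOn_of_deriv_pos (convex_Ioo _ _) han.continuousOn fun s hs => ?_
    rw [interior_Ioo] at hs
    rw [hd1 s hs]
    exact hgpos s hs
  · exact strictConvexOn_of_deriv2_pos' (convex_Ioo _ _) han.continuousOn hd2pos
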